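/- arXiv:2012.11927 — 6 statements merged into one kernel-verified Lean document; each statement's English description precedes it below -/
import Mathlib

section
/- Let k be a field, A a nonzero finite-dimensional k-algebra, and r a unit of the centre of A. Let φ_r be the k-algebra automorphism of the trivial extension algebra T(A) defined by φ_r(a, f) = (a, r·f) for (a,f) ∈ A ⊕ D(A). Then φ_r is an inner automorphism of T(A) (i.e., there exists a unit t of T(A) with φ_r(x) = t x t⁻¹ for all x ∈ T(A)) if and only if r = 1. -/
section DualBimodule

variable (k A : Type) [Field k] [Ring A] [Algebra k A]

/-- The left `A`-action on `D(A) = Hom_k(A, k)`, given by `(a • f) x = f (x * a)`. -/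
noncomputable instance Module.Dual.leftModule : Module A (Module.Dual k A) where
  smul a f := f ∘ₗ LinearMap.mulRight k a
  one_smul f := LinearMap.ext fun x => by show f (x * 1) = f x; rw [mul_one]
  mul_smul a b f := LinearMap.ext fun x => by
    show f (x * (a * b)) = f (x * a * b); rw [mul_assoc]
  smul_zero a := LinearMap.ext fun x => by show (0 : Module.Dual k A) (x * a) = 0; rfl
  smul_add a f g := LinearMap.ext fun x => by
    show (f + g) (x * a) = f (x * a) + g (x * a); rfl
  add_smul a b f := LinearMap.ext fun x => by
    show f (x * (a + b)) = f (x * a) + f (x * b); rw [mul_add, map_add]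
  zero_smul f := LinearMap.ext fun x => by show f (x * 0) = 0; rw [mul_zero, map_zero]

/-- The right `A`-action on `D(A) = Hom_k(A, k)`, given by `(f • op b) x = f (b * x)`. -/
noncomputable instance Module.Dual.rightModule : Module Aᵐᵒᵖ (Module.Dual k A) where
  smul b f := f ∘ₗ LinearMap.mulLeft k b.unop
  one_smul f := LinearMap.ext fun x => by show f (1 * x) = f x; rw [one_mul]
  mul_smul a b f := LinearMap.ext fun x => by
    show f ((a * b).unop * x) = f (b.unop * (a.unop * x))
    rw [MulOpposite.unop_mul, mul_assoc]
  smul_zero a := LinearMap.ext fun x => by show (0 : Module.Dual k A) (a.unop * x) = 0; rfl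
  smul_add a f g := LinearMap.ext fun x => by
    show (f + g) (a.unop * x) = f (a.unop * x) + g (a.unop * x); rfl
  add_smul a b f := LinearMap.ext fun x => by
    show f ((a + b).unop * x) = f (a.unop * x) + f (b.unop * x)
    rw [MulOpposite.unop_add, add_mul, map_add]
  zero_smul f := LinearMap.ext fun x => by
    show f ((0 : Aᵐᵒᵖ).unop * x) = 0
    rw [MulOpposite.unop_zero, zero_mul, map_zero]

instance : SMulCommClass A Aᵐᵒᵖ (Module.Dual k A) where
  smul_comm a b f := LinearMap.ext fun x => by
    show f (b.unop * (x * a)) = f (b.unop * x * a); rw [mul_assoc]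

instance : IsScalarTower k A (Module.Dual k A) where
  smul_assoc c a f := LinearMap.ext fun x => by
    show f (x * (c • a)) = c • f (x * a)
    rw [mul_smul_comm, map_smul]

instance : IsScalarTower k Aᵐᵒᵖ (Module.Dual k A) where
  smul_assoc c b f := LinearMap.ext fun x => by
    show f ((c • b).unop * x) = c • f (b.unop * x)
    rw [MulOpposite.unop_smul, smul_mul_assoc, map_smul]

/-- The trivial extension algebra `T(A) = A ⊕ D(A)`. -/
noncomputable abbrev TrivialExtension : Type := TrivSqZeroExt A (Module.Dual k A)


/-- Let `A` be a nonzero finite-dimensional `k`-algebra and `r` a unit of the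
centre of `A`. The `k`-algebra automorphism `φ_r` of `T(A)` given by `φ_r (a, f) = (a, r • f)`
is inner if and only if `r = 1`. -/
theorem trivialExtension_twist_inner_iff (r : A) (hr : r ∈ Subring.center A) (hru : IsUnit r)
    [Nontrivial A] [FiniteDimensional k A] :
    (∃ t : (TrivialExtension k A)ˣ, ∀ x : TrivialExtension k A,
        TrivSqZeroExt.inl (TrivSqZeroExt.fst x) + TrivSqZeroExt.inr (r • TrivSqZeroExt.snd x)
          = (t : TrivialExtension k A) * x * ((t⁻¹ : (TrivialExtension k A)ˣ) : TrivialExtension k A)) ↔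
      r = 1 := by
  constructor
  · rintro ⟨t, ht⟩
    have hu : IsUnit (TrivSqZeroExt.fst (t : TrivialExtension k A)) := by
      refine ⟨⟨TrivSqZeroExt.fst (t : TrivialExtension k A),
        TrivSqZeroExt.fst ((t⁻¹ : (TrivialExtension k A)ˣ) : TrivialExtension k A), ?_, ?_⟩, rfl⟩
      · rw [← TrivSqZeroExt.fst_mul, Units.mul_inv, TrivSqZeroExt.fst_one]
      · rw [← TrivSqZeroExt.fst_mul, Units.inv_mul, TrivSqZeroExt.fst_one]
    have key : ∀ f : Module.Dual k A,
        f (TrivSqZeroExt.fst (t : TrivialExtension k A) * r)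
          = f (TrivSqZeroExt.fst (t : TrivialExtension k A)) := by
      intro f
      have h := ht (TrivSqZeroExt.inr f)
      rw [Units.eq_mul_inv_iff_mul_eq] at h
      have h2 := congrArg TrivSqZeroExt.snd h
      simp only [TrivSqZeroExt.fst_inr, TrivSqZeroExt.snd_inr, TrivSqZeroExt.inl_zero, zero_add,
        TrivSqZeroExt.snd_mul, zero_smul, MulOpposite.op_zero, add_zero] at h2
      have h3 := LinearMap.congr_fun h2 (1 : A)
      have h4 : f (TrivSqZeroExt.fst (t : TrivialExtension k A) * 1 * r)
          = f (1 * TrivSqZeroExt.fst (t : TrivialExtension k A)) := h3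
      rwa [mul_one, one_mul] at h4
    have h5 : TrivSqZeroExt.fst (t : TrivialExtension k A) * r
        = TrivSqZeroExt.fst (t : TrivialExtension k A) := by
      rw [← sub_eq_zero]
      refine (Module.forall_dual_apply_eq_zero_iff k _).1 fun f => ?_
      rw [map_sub, key f, sub_self]
    exact hu.mul_left_cancel (h5.trans (mul_one _).symm)
  · rintro rfl
    refine ⟨1, fun x => ?_⟩
    rw [one_smul, inv_one, Units.val_one, one_mul, mul_one, TrivSqZeroExt.inl_fst_add_inr_snd_eq]

end DualBimodule
end

section
/- Let A be a finite-dimensional algebra over a field k and let φ, ψ be k-algebra automorphisms of A. Then the restriction functors φ^* and ψ^* on the category of A-modules are naturally isomorphic if and only if there exists a unit u of A such that φ(a) = u⁻¹ ψ(a) u for all a ∈ A (i.e., φ and ψ differ by an inner automorphism). -/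
open CategoryTheory

universe w

/-- Right multiplication on the regular module. -/
def rMulHom (A : Type) [Ring A] (x : A) :
    ModuleCat.of A (ULift.{w} A) ⟶ ModuleCat.of A (ULift.{w} A) :=
  ModuleCat.ofHom
    { toFun := fun y => ULift.up (y.down * x)
      map_add' := fun y z => by ext; simp [add_mul]
      map_smul' := fun a y => by ext; simp [mul_assoc] }

theorem nat_apply (A : Type) [Ring A] (f g : A →+* A)
    (η : ModuleCat.restrictScalars.{w} f ⟶ ModuleCat.restrictScalars.{w} g) :
    ∃ h : ULift.{w} A → ULift.{w} A,
      (∀ x, h x = η.app (ModuleCat.of A (ULift.{w} A)) x) ∧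
      (∀ x : A, (h ⟨x⟩).down = (h ⟨1⟩).down * x) ∧
      (∀ a : A, (h ⟨f a⟩).down = g a * (h ⟨1⟩).down) := by
  refine ⟨fun x => η.app (ModuleCat.of A (ULift.{w} A)) x, fun x => rfl, fun x => ?_, fun a => ?_⟩
  · have h := ConcreteCategory.congr_hom (η.naturality (rMulHom.{w} A x)) (ULift.up (1 : A))
    have h2 : η.app (ModuleCat.of A (ULift.{w} A)) (ULift.up ((1 : A) * x))
      = ULift.up ((ULift.down (η.app (ModuleCat.of A (ULift.{w} A)) (ULift.up (1 : A)))) * x) := h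
    rw [one_mul] at h2
    exact congrArg ULift.down h2
  · have h := (η.app (ModuleCat.of A (ULift.{w} A))).hom.map_smul a (ULift.up (1 : A))
    have h2 : η.app (ModuleCat.of A (ULift.{w} A)) (ULift.up (f a * (1 : A)))
      = ULift.up (g a * (ULift.down (η.app (ModuleCat.of A (ULift.{w} A)) (ULift.up (1 : A))))) := h
    rw [mul_one] at h2
    exact congrArg ULift.down h2

/-- The natural map given by multiplication by an intertwining element. -/
noncomputable def mulNat (A : Type) [Ring A] (f g : A →+* A) (u : A) (hu : ∀ a, u * f a = g a * u) :
    ModuleCat.restrictScalars.{w} f ⟶ ModuleCat.restrictScalars.{w} g where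
  app M := ModuleCat.ofHom (X := (ModuleCat.restrictScalars f).obj M)
      (Y := (ModuleCat.restrictScalars g).obj M)
    { toFun := fun m => (u • (show M from m) : M)
      map_add' := fun y z => smul_add u (show M from y) (show M from z)
      map_smul' := fun a y => by
        change u • (f a • (show M from y)) = g a • (u • (show M from y))
        rw [smul_smul, smul_smul, hu] }
  naturality M N h := by
    ext m
    exact (h.hom.map_smul u (show M from m)).symm

/-- For `k`-algebra automorphisms `φ, ψ` of a finite-dimensional `k`-algebra
`A`, the restriction functors `φ^*` and `ψ^*` on the category of `A`-modules are naturally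
isomorphic if and only if `φ` and `ψ` differ by an inner automorphism. -/
theorem restrictScalars_iso_iff_inner (k A : Type) [Field k] [Ring A] [Algebra k A]
    [FiniteDimensional k A] (φ ψ : A ≃ₐ[k] A) :
    Nonempty (ModuleCat.restrictScalars (φ : A →+* A) ≅ ModuleCat.restrictScalars (ψ : A →+* A)) ↔
      ∃ u : Aˣ, ∀ a : A, φ a = ((u⁻¹ : Aˣ) : A) * ψ a * (u : A) := by
  constructor
  · rintro ⟨e⟩
    obtain ⟨h, h1, h2, h3⟩ := nat_apply A _ _ e.hom
    obtain ⟨h', h1', h2', h3'⟩ := nat_apply A _ _ e.inv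
    have c1 : ∀ x, h' (h x) = x := fun x => by
      rw [h1', h1]
      exact ConcreteCategory.congr_hom (e.hom_inv_id_app (ModuleCat.of A (ULift A))) x
    have c2 : ∀ x, h (h' x) = x := fun x => by
      rw [h1, h1']
      exact ConcreteCategory.congr_hom (e.inv_hom_id_app (ModuleCat.of A (ULift A))) x
    refine ⟨⟨(h ⟨1⟩).down, (h' ⟨1⟩).down, ?_, ?_⟩, fun a => ?_⟩
    · rw [← h2]; exact congrArg ULift.down (c2 ⟨1⟩)
    · rw [← h2']; exact congrArg ULift.down (c1 ⟨1⟩)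
    · rw [mul_assoc, Units.eq_inv_mul_iff_mul_eq]
      exact (h2 (φ a)).symm.trans (h3 a)
  · rintro ⟨u, hu⟩
    have k1 : ∀ a, (u : A) * (φ : A →+* A) a = (ψ : A →+* A) a * u := fun a => by
      change (u : A) * φ a = ψ a * u
      rw [hu, mul_assoc, Units.mul_inv_cancel_left]
    have k2 : ∀ a, ((u⁻¹ : Aˣ) : A) * (ψ : A →+* A) a = (φ : A →+* A) a * (u⁻¹ : Aˣ) := fun a => by
      change ((u⁻¹ : Aˣ) : A) * ψ a = φ a * (u⁻¹ : Aˣ)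
      rw [hu, Units.mul_inv_cancel_right]
    refine ⟨⟨mulNat A _ _ _ k1, mulNat A _ _ _ k2, ?_, ?_⟩⟩
    · ext M m
      change ((u⁻¹ : Aˣ) : A) • ((u : A) • (show M from m)) = (show M from m)
      rw [smul_smul, Units.inv_mul, one_smul]
    · ext M m
      change (u : A) • (((u⁻¹ : Aˣ) : A) • (show M from m)) = (show M from m)
      rw [smul_smul, Units.mul_inv, one_smul]
end

section
/- Let A and B be finite-dimensional algebras over a field k. The product algebra A × B is periodic if and only if both A and B are periodic. -/
open TensorProduct

/-- There is an exact sequence `0 → M → P_n → ⋯ → P_1 → N → 0` of `R`-modules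
(so with `n` middle terms) in which each middle term `P_i` is projective. -/
def HasProjExactSeq (R : Type) [Ring R] (M N : ModuleCat R) (n : ℕ) : Prop :=
  ∃ (P : ℕ → ModuleCat R) (d : ∀ i, P (i + 1) →ₗ[R] P i)
    (_ : (P 0 : Type) ≃ₗ[R] N) (_ : (M : Type) ≃ₗ[R] P (n + 1)),
    (∀ i, 1 ≤ i → i ≤ n → Module.Projective R (P i)) ∧
    Function.Surjective (d 0) ∧ Function.Injective (d n) ∧
    ∀ i < n, LinearMap.range (d (i + 1)) = LinearMap.ker (d i)

/-- The regular bimodule `B` as a module over the enveloping algebra `B ⊗[k] Bᵐᵒᵖ`. -/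
noncomputable def regularBimodule (k B : Type) [Field k] [Ring B] [Algebra k B] :
    ModuleCat (B ⊗[k] Bᵐᵒᵖ) :=
  letI : Module (B ⊗[k] Bᵐᵒᵖ) B := TensorProduct.Algebra.module
  ModuleCat.of _ B

/-- A finite-dimensional `k`-algebra `B` is periodic if there are `n ≥ 1` and an exact
sequence `0 → B → P_{n-1} → ⋯ → P_0 → B → 0` of `B`-`B`-bimodules (modules over the
enveloping algebra `B ⊗[k] Bᵐᵒᵖ`) with all `P_i` projective. -/
noncomputable def IsPeriodicAlgebra (k B : Type) [Field k] [Ring B] [Algebra k B] : Prop :=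
  ∃ n : ℕ, 1 ≤ n ∧ HasProjExactSeq (B ⊗[k] Bᵐᵒᵖ) (regularBimodule k B) (regularBimodule k B) n


namespace PerAux

inductive Syz (R : Type) [Ring R] (M : ModuleCat.{0} R) : ModuleCat.{0} R → ℕ → Prop
  | zero (N : ModuleCat.{0} R) (e : M ≃ₗ[R] N) : Syz R M N 0
  | succ (K P N : ModuleCat.{0} R) (n : ℕ) (f : K →ₗ[R] P) (g : P →ₗ[R] N)
      (hP : Module.Projective R P) (hf : Function.Injective f) (hg : Function.Surjective g)
      (hex : ∀ x, g x = 0 ↔ ∃ y, f y = x) (h : Syz R M K n) : Syz R M N (n + 1)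

def shift {R : Type} [Ring R] (K : ModuleCat.{0} R) (P : ℕ → ModuleCat.{0} R) :
    ℕ → ModuleCat.{0} R
  | 0 => K
  | j + 1 => P j

def shiftD {R : Type} [Ring R] (K : ModuleCat.{0} R) (P : ℕ → ModuleCat.{0} R)
    (d0 : P 0 →ₗ[R] K) (d : ∀ i, P (i + 1) →ₗ[R] P i) :
    (i : ℕ) → (shift K P (i + 1) →ₗ[R] shift K P i)
  | 0 => d0
  | j + 1 => d j

theorem syz_of_hpes {R : Type} [Ring R] (M : ModuleCat.{0} R) (n : ℕ) : ∀ (N : ModuleCat.{0} R),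
    HasProjExactSeq R M N n → Syz R M N n := by
  induction n with
  | zero =>
    rintro N ⟨P, d, e0, e1, hP, hs, hi, hex⟩
    exact .zero N ((e1.trans (LinearEquiv.ofBijective (d 0) ⟨hi, hs⟩)).trans e0)
  | succ n ih =>
    rintro N ⟨P, d, e0, e1, hP, hs, hi, hex⟩
    have h0 := hex 0 (by omega)
    let K : ModuleCat.{0} R := ModuleCat.of R (LinearMap.ker (d 0))
    refine .succ K (P 1) N n (LinearMap.ker (d 0)).subtype (e0.toLinearMap ∘ₗ d 0)
      (hP 1 le_rfl (by omega)) (Subtype.val_injective) (e0.surjective.comp hs) ?_ (ih K ?_)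
    · intro x
      simp [K]
    · let P' : ℕ → ModuleCat.{0} R := shift K (fun j => P (j + 2))
      have hd : ∀ x, d 1 x ∈ LinearMap.ker (d 0) := fun x => by
        rw [← h0]; exact ⟨x, rfl⟩
      let d1 : P 2 →ₗ[R] LinearMap.ker (d 0) := (d 1).codRestrict _ hd
      let d' := shiftD K (fun j => P (j + 2)) d1 (fun j => d (j + 2))
      refine ⟨P', d', LinearEquiv.refl R K, e1, ?_, ?_, ?_, ?_⟩
      · intro i h1 h2
        obtain ⟨j, rfl⟩ : ∃ j, i = j + 1 := ⟨i - 1, by omega⟩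
        exact hP (j + 2) (by omega) (by omega)
      · rintro ⟨x, hx⟩
        rw [← h0] at hx
        obtain ⟨y, hy⟩ := hx
        exact ⟨y, Subtype.ext hy⟩
      · cases n with
        | zero =>
          intro x y hxy
          exact hi (congrArg Subtype.val hxy)
        | succ m => exact hi
      · intro i hi'
        cases i with
        | zero =>
          have h1 := hex 1 (by omega)
          change LinearMap.range (d 2) = LinearMap.ker d1
          rw [LinearMap.ker_codRestrict]; exact h1
        | succ j => exact hex (j + 2) (by omega)

theorem hpes_of_syz {R : Type} [Ring R] {M N : ModuleCat.{0} R} {n : ℕ} (h : Syz R M N n) :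
    HasProjExactSeq R M N n := by
  induction h with
  | zero N e =>
    refine ⟨fun i => Nat.casesOn i N (fun _ => M), fun i => match i with
      | 0 => e.toLinearMap
      | j + 1 => LinearMap.id, LinearEquiv.refl R N, LinearEquiv.refl R M, ?_, ?_, ?_, ?_⟩
    · intro i h1 h2; omega
    · exact e.surjective
    · exact e.injective
    · intro i hi; omega
  | succ K Q N n f g hQ hf hg hex h ih =>
    obtain ⟨P, d, e0, e1, hP, hs, hi, hex'⟩ := ih
    let P' : ℕ → ModuleCat.{0} R := shift N (shift Q (fun l => P (l + 1)))
    let d1 : P 1 →ₗ[R] Q := f ∘ₗ e0.toLinearMap ∘ₗ d 0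
    let d' := shiftD N (shift Q (fun l => P (l + 1))) g
      (shiftD Q (fun l => P (l + 1)) d1 (fun l => d (l + 1)))
    refine ⟨P', d', LinearEquiv.refl R N, e1, ?_, ?_, ?_, ?_⟩
    · intro i h1 h2
      match i, h1, h2 with
      | 1, _, _ => exact hQ
      | j + 2, _, h2 => exact hP (j + 1) (by omega) (by omega)
    · exact hg
    · cases n with
      | zero => exact hf.comp (e0.injective.comp hi)
      | succ m => exact hi
    · intro i hi'
      match i, hi' with
      | 0, _ =>
        change LinearMap.range d1 = LinearMap.ker g
        ext x
        rw [LinearMap.mem_ker, hex]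
        constructor
        · rintro ⟨y, rfl⟩; exact ⟨_, rfl⟩
        · rintro ⟨y, rfl⟩
          obtain ⟨z, hz⟩ := (e0.surjective.comp hs) y
          exact ⟨z, congrArg f hz⟩
      | 1, h =>
        have h0 := hex' 0 (by omega)
        change LinearMap.range (d 1) = LinearMap.ker d1
        rw [h0]
        ext x
        rw [LinearMap.mem_ker, LinearMap.mem_ker]
        change _ ↔ f (e0 (d 0 x)) = 0
        rw [map_eq_zero_iff f hf, map_eq_zero_iff e0 e0.injective]
      | j + 2, h => exact hex' (j + 1) (by omega)

theorem Syz.congr_left {R : Type} [Ring R] {M M' N : ModuleCat.{0} R} {n : ℕ}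
    (h : Syz R M N n) (e : M' ≃ₗ[R] M) : Syz R M' N n := by
  induction h with
  | zero N e' => exact .zero N (e.trans e')
  | succ K Q N n f g hQ hf hg hex h ih => exact .succ K Q N n f g hQ hf hg hex ih

theorem Syz.congr_right {R : Type} [Ring R] {M N N' : ModuleCat.{0} R} {n : ℕ}
    (h : Syz R M N n) (e : N ≃ₗ[R] N') : Syz R M N' n := by
  cases h with
  | zero _ e' => exact .zero N' (e'.trans e)
  | succ K Q _ n f g hQ hf hg hex h =>
    refine .succ K Q N' n f (e.toLinearMap ∘ₗ g) hQ hf (e.surjective.comp hg) ?_ h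
    intro x
    rw [← hex]
    exact map_eq_zero_iff e e.injective

theorem Syz.trans {R : Type} [Ring R] {M N L : ModuleCat.{0} R} {n m : ℕ}
    (h : Syz R M N n) (h' : Syz R N L m) : Syz R M L (n + m) := by
  induction h' with
  | zero N e' => exact h.congr_right e'
  | succ K Q N m f g hQ hf hg hex _ ih => exact .succ K Q N (n + m) f g hQ hf hg hex ih

theorem Syz.mul {R : Type} [Ring R] {M : ModuleCat.{0} R} {n : ℕ}
    (h : Syz R M M n) (m : ℕ) : Syz R M M (n * m) := by
  induction m with
  | zero => exact .zero M (LinearEquiv.refl R M)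
  | succ m ih => exact ih.trans h

theorem Syz.prod {R : Type} [Ring R] {M N M' N' : ModuleCat.{0} R} {n : ℕ}
    (h : Syz R M N n) (h' : Syz R M' N' n) :
    Syz R (ModuleCat.of R (M × M')) (ModuleCat.of R (N × N')) n := by
  induction h generalizing N' with
  | zero N e =>
    cases h' with
    | zero _ e' => exact .zero _ (LinearEquiv.prodCongr e e')
  | succ K Q N n f g hQ hf hg hex _ ih =>
    cases h' with
    | succ K' Q' _ _ f' g' hQ' hf' hg' hex' h' =>
      refine .succ _ (ModuleCat.of R (Q × Q')) _ n (f.prodMap f') (g.prodMap g')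
        (inferInstanceAs (Module.Projective R (Q × Q'))) (Prod.map_injective.2 ⟨hf, hf'⟩)
        (Prod.map_surjective.2 ⟨hg, hg'⟩) ?_ (ih h')
      rintro ⟨x, y⟩
      change (g x, g' y) = 0 ↔ ∃ z : K × K', (f z.1, f' z.2) = (x, y)
      rw [Prod.mk_eq_zero, hex, hex']
      constructor
      · rintro ⟨⟨a, rfl⟩, ⟨b, rfl⟩⟩; exact ⟨(a, b), rfl⟩
      · rintro ⟨⟨a, b⟩, h⟩
        exact ⟨⟨a, congrArg Prod.fst h⟩, ⟨b, congrArg Prod.snd h⟩⟩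

/-- `S` is a ring direct factor of `R`. -/
structure Fac (R S : Type) [Ring R] [Ring S] where
  φ : R →+* S
  ψ : S →+ R
  hmul : ∀ a b, ψ (a * b) = ψ a * ψ b
  h1 : ∀ s, φ (ψ s) = s
  h2 : ∀ r, ψ (φ r) = ψ 1 * r
  h3 : ∀ r, ψ (φ r) = r * ψ 1

section
variable {R S : Type} [Ring R] [Ring S] (D : Fac R S)

def cor (M : Type) [AddCommGroup M] [Module R M] : AddSubgroup M where
  carrier := {x | D.ψ 1 • x = x}
  zero_mem' := smul_zero _
  add_mem' := fun {a b} ha hb => by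
    change D.ψ 1 • a = a at ha
    change D.ψ 1 • b = b at hb
    change D.ψ 1 • (a + b) = a + b
    rw [smul_add, ha, hb]
  neg_mem' := fun {a} ha => by
    change D.ψ 1 • a = a at ha
    change D.ψ 1 • (-a) = -a
    rw [smul_neg, ha]

theorem mem_cor {M : Type} [AddCommGroup M] [Module R M] {x : M} :
    x ∈ cor D M ↔ D.ψ 1 • x = x := Iff.rfl

theorem smul_mem_cor {M : Type} [AddCommGroup M] [Module R M] (s : S) (x : M) :
    D.ψ s • x ∈ cor D M := by
  rw [mem_cor, smul_smul, ← D.hmul, one_mul]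

theorem comm' (r : R) : D.ψ 1 * r = r * D.ψ 1 := by rw [← D.h2, ← D.h3]

instance corModule (M : Type) [AddCommGroup M] [Module R M] : Module S (cor D M) where
  smul s x := ⟨D.ψ s • x.1, smul_mem_cor D s x.1⟩
  one_smul x := Subtype.ext x.2
  mul_smul a b x := Subtype.ext (by
    change D.ψ (a * b) • x.1 = D.ψ a • D.ψ b • x.1
    rw [D.hmul, mul_smul])
  smul_zero a := Subtype.ext (smul_zero _)
  smul_add a x y := Subtype.ext (smul_add _ _ _)
  add_smul a b x := Subtype.ext (by
    change D.ψ (a + b) • x.1 = D.ψ a • x.1 + D.ψ b • x.1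
    rw [map_add, add_smul])
  zero_smul x := Subtype.ext (by
    change D.ψ 0 • x.1 = 0
    rw [map_zero, zero_smul])

theorem cor_smul_val {M : Type} [AddCommGroup M] [Module R M] (s : S) (x : cor D M) :
    (s • x).1 = D.ψ s • x.1 := rfl

/-- `φ r` acts on the corner as `r`. -/
theorem cor_phi_smul {M : Type} [AddCommGroup M] [Module R M] (r : R) (x : cor D M) :
    (D.φ r • x).1 = r • x.1 := by
  rw [cor_smul_val, D.h3, mul_smul, (mem_cor D).1 x.2]

def corMap {M N : Type} [AddCommGroup M] [Module R M] [AddCommGroup N] [Module R N]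
    (f : M →ₗ[R] N) : cor D M →ₗ[S] cor D N where
  toFun x := ⟨f x.1, by rw [mem_cor, ← map_smul, (mem_cor D).1 x.2]⟩
  map_add' x y := Subtype.ext (map_add f _ _)
  map_smul' s x := Subtype.ext (map_smul f _ _)

theorem corMap_surj {M N : Type} [AddCommGroup M] [Module R M] [AddCommGroup N] [Module R N]
    (f : M →ₗ[R] N) (hf : Function.Surjective f) : Function.Surjective (corMap D f) := by
  rintro ⟨y, hy⟩
  obtain ⟨x, rfl⟩ := hf y
  refine ⟨⟨D.ψ 1 • x, smul_mem_cor D 1 x⟩, Subtype.ext ?_⟩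
  change f (D.ψ 1 • x) = f x
  rw [map_smul]; exact hy

theorem cor_proj (P : Type) [AddCommGroup P] [Module R P] [Module.Projective R P] :
    Module.Projective S (cor D P) := by
  refine Module.Projective.of_lifting_property'' (R := S) (P := cor D P) ?_
  intro f hf
  let F := (cor D P →₀ S)
  let : Module R F := Module.compHom F D.φ
  let : Module R (cor D P) := Module.compHom (cor D P) D.φ
  let f' : F →ₗ[R] cor D P :=
    { toFun := f, map_add' := map_add f, map_smul' := fun r x => map_smul f (D.φ r) x }
  let g : P →ₗ[R] cor D P :=
    { toFun := fun x => ⟨D.ψ 1 • x, smul_mem_cor D 1 x⟩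
      map_add' := fun x y => Subtype.ext (smul_add _ _ _)
      map_smul' := fun r x => Subtype.ext (by
        change _ = (D.φ r • (⟨D.ψ 1 • x, smul_mem_cor D 1 x⟩ : cor D P)).1
        rw [cor_phi_smul]
        change D.ψ 1 • r • x = r • D.ψ 1 • x
        rw [smul_smul, smul_smul, comm']) }
  obtain ⟨h, hh⟩ := Module.projective_lifting_property f' g hf
  refine ⟨{ toFun := fun x => h x.1, map_add' := fun x y => map_add h _ _, map_smul' := ?_ }, ?_⟩
  · intro s x
    change h (D.ψ s • x.1) = s • h x.1
    rw [map_smul]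
    change D.φ (D.ψ s) • h x.1 = _
    rw [D.h1]
  · ext x
    have := congrArg Subtype.val (LinearMap.congr_fun hh x.1)
    change (f (h x.1)).1 = x.1
    refine this.trans ?_
    exact x.2

def res (M : ModuleCat.{0} S) : ModuleCat.{0} R :=
  letI : Module R M := Module.compHom M D.φ
  ModuleCat.of R M

def toRes {M : ModuleCat.{0} S} : M ≃+ res D M := AddEquiv.refl _

theorem toRes_smul {M : ModuleCat.{0} S} (r : R) (x : M) :
    r • toRes D x = toRes D (D.φ r • x) := rfl

theorem res_proj (P : ModuleCat.{0} S) [Module.Projective S P] :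
    Module.Projective R (res D P) := by
  refine Module.Projective.of_lifting_property'' (R := R) (P := res D P) ?_
  intro f hf
  have hmem : ∀ x : P, D.ψ 1 • toRes D x = toRes D x := fun x => by
    rw [toRes_smul, D.h1, one_smul]
  let g : P →ₗ[S] cor D (res D P) :=
    { toFun := fun x => ⟨toRes D x, hmem x⟩
      map_add' := fun _ _ => rfl
      map_smul' := fun s x => Subtype.ext (by
        change toRes D (s • x) = D.ψ s • toRes D x
        rw [toRes_smul, D.h1]) }
  obtain ⟨h, hh⟩ := Module.projective_lifting_property (corMap D f) g (corMap_surj D f hf)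
  refine ⟨{ toFun := fun x => (h ((toRes D).symm x)).1, map_add' := fun x y => ?_,
            map_smul' := ?_ }, ?_⟩
  · rw [map_add, map_add]; rfl
  · intro r x
    change (h (D.φ r • (toRes D).symm x)).1 = r • (h ((toRes D).symm x)).1
    rw [map_smul, cor_phi_smul]
  · refine LinearMap.ext fun x => ?_
    exact congrArg Subtype.val (LinearMap.congr_fun hh ((toRes D).symm x))

def resMap {M N : ModuleCat.{0} S} (f : M →ₗ[S] N) : res D M →ₗ[R] res D N where
  toFun x := toRes D (f ((toRes D).symm x))
  map_add' _ _ := map_add f _ _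
  map_smul' r x := map_smul f (D.φ r) ((toRes D).symm x)

theorem Syz.res {M N : ModuleCat.{0} S} {n : ℕ} (h : Syz S M N n) :
    Syz R (res D M) (res D N) n := by
  induction h with
  | zero N e =>
    exact .zero _ (LinearEquiv.ofBijective (resMap D e.toLinearMap) e.bijective)
  | succ K Q N n f g hQ hf hg hex _ ih =>
    exact .succ _ (PerAux.res D Q) _ n (resMap D f) (resMap D g) (res_proj D Q) hf hg hex ih

theorem Syz.cor {M N : ModuleCat.{0} R} {n : ℕ} (h : Syz R M N n) :
    Syz S (ModuleCat.of S (cor D M)) (ModuleCat.of S (cor D N)) n := by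
  induction h with
  | zero N e =>
    refine .zero _ (LinearEquiv.ofBijective (corMap D e.toLinearMap)
      ⟨fun x y hxy => Subtype.ext (e.injective (congrArg Subtype.val hxy)),
        corMap_surj D _ e.surjective⟩)
  | succ K Q N n f g hQ hf hg hex _ ih =>
    refine .succ _ (ModuleCat.of S (PerAux.cor D Q)) _ n (corMap D f) (corMap D g) (cor_proj D Q)
      (fun x y hxy => Subtype.ext (hf (congrArg Subtype.val hxy))) (corMap_surj D _ hg) ?_ ih
    rintro ⟨x, hx⟩
    constructor
    · intro h
      obtain ⟨y, rfl⟩ := (hex x).1 (congrArg Subtype.val h)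
      refine ⟨⟨y, hf ?_⟩, rfl⟩
      rw [map_smul]; exact hx
    · rintro ⟨y, hy⟩
      exact Subtype.ext ((hex x).2 ⟨y.1, congrArg Subtype.val hy⟩)

end

section
variable {k : Type} [Field k]

theorem reg_smul {C : Type} [Ring C] [Algebra k C] (a : C) (b : Cᵐᵒᵖ) (x : C) :
    ((a ⊗ₜ[k] b) • (show regularBimodule k C from x) : regularBimodule k C) =
      (show regularBimodule k C from (a * x * b.unop)) := by
  refine (TensorProduct.Algebra.smul_def (R := k) a b x).trans ?_
  change a * (x * b.unop) = _
  exact (mul_assoc _ _ _).symm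

/-- Factor data for algebras. -/
structure AFac (k C A : Type) [Field k] [Ring C] [Ring A] [Algebra k C] [Algebra k A] where
  p : C →ₐ[k] A
  i : A →ₗ[k] C
  hmul : ∀ a b, i (a * b) = i a * i b
  h1 : ∀ s, p (i s) = s
  h2 : ∀ r, i (p r) = i 1 * r
  h3 : ∀ r, i (p r) = r * i 1

variable {C A : Type} [Ring C] [Ring A] [Algebra k C] [Algebra k A] (E : AFac k C A)

noncomputable def iop : Aᵐᵒᵖ →ₗ[k] Cᵐᵒᵖ :=
  (MulOpposite.opLinearEquiv k).toLinearMap ∘ₗ E.i ∘ₗ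
    (MulOpposite.opLinearEquiv k).symm.toLinearMap

theorem iop_apply (x : Aᵐᵒᵖ) : iop E x = MulOpposite.op (E.i x.unop) := rfl

noncomputable def AFac.env : Fac (C ⊗[k] Cᵐᵒᵖ) (A ⊗[k] Aᵐᵒᵖ) where
  φ := (Algebra.TensorProduct.map E.p (AlgHom.op E.p)).toRingHom
  ψ := (TensorProduct.map E.i (iop E)).toAddMonoidHom
  hmul a b := by
    change TensorProduct.map E.i (iop E) (a * b) =
      TensorProduct.map E.i (iop E) a * TensorProduct.map E.i (iop E) b
    induction a using TensorProduct.induction_on with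
    | zero => simp
    | add x y hx hy => rw [add_mul, map_add, map_add, add_mul, hx, hy]
    | tmul x y =>
      induction b using TensorProduct.induction_on with
      | zero => simp
      | add x y hx hy => rw [mul_add, map_add, map_add, mul_add, hx, hy]
      | tmul z w => simp [iop_apply, E.hmul]
  h1 a := by
    change Algebra.TensorProduct.map E.p (AlgHom.op E.p) (TensorProduct.map E.i (iop E) a) = a
    induction a using TensorProduct.induction_on with
    | zero => simp
    | add x y hx hy => rw [map_add, map_add, hx, hy]
    | tmul x y => simp [iop_apply, E.h1]
  h2 a := by
    change TensorProduct.map E.i (iop E) (Algebra.TensorProduct.map E.p (AlgHom.op E.p) a) =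
      TensorProduct.map E.i (iop E) 1 * a
    induction a using TensorProduct.induction_on with
    | zero => simp
    | add x y hx hy => rw [map_add, map_add, mul_add, hx, hy]
    | tmul x y =>
      rw [Algebra.TensorProduct.one_def]
      simp only [Algebra.TensorProduct.map_tmul, TensorProduct.map_tmul, iop_apply,
        Algebra.TensorProduct.tmul_mul_tmul, E.h2]
      congr 1
      exact congrArg MulOpposite.op (E.h3 y.unop)
  h3 a := by
    change TensorProduct.map E.i (iop E) (Algebra.TensorProduct.map E.p (AlgHom.op E.p) a) =
      a * TensorProduct.map E.i (iop E) 1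
    induction a using TensorProduct.induction_on with
    | zero => simp
    | add x y hx hy => rw [map_add, map_add, add_mul, hx, hy]
    | tmul x y =>
      rw [Algebra.TensorProduct.one_def]
      simp only [Algebra.TensorProduct.map_tmul, TensorProduct.map_tmul, iop_apply,
        Algebra.TensorProduct.tmul_mul_tmul, E.h3]
      congr 1
      exact congrArg MulOpposite.op (E.h2 y.unop)

theorem env_φ (a : C) (b : Cᵐᵒᵖ) :
    E.env.φ (a ⊗ₜ b) = E.p a ⊗ₜ MulOpposite.op (E.p b.unop) := rfl

theorem env_ψ (a : A) (b : Aᵐᵒᵖ) :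
    E.env.ψ (a ⊗ₜ b) = E.i a ⊗ₜ MulOpposite.op (E.i b.unop) := rfl

/-- Projection as a map of modules over the enveloping algebra. -/
noncomputable def regProj : regularBimodule k C →ₗ[C ⊗[k] Cᵐᵒᵖ] res E.env (regularBimodule k A) where
  toFun x := toRes E.env (show regularBimodule k A from E.p (show C from x))
  map_add' x y := map_add E.p _ _
  map_smul' r x := by
    rw [RingHom.id_apply, toRes_smul]
    congr 1
    induction r using TensorProduct.induction_on with
    | zero =>
      rw [map_zero]
      refine Eq.trans ?_ (zero_smul (A ⊗[k] Aᵐᵒᵖ) (A := regularBimodule k A) _).symm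
      exact (congrArg E.p (zero_smul (C ⊗[k] Cᵐᵒᵖ) x)).trans (map_zero E.p)
    | add a b ha hb =>
      rw [map_add]
      refine Eq.trans ?_ (add_smul (E.env.φ a) (E.env.φ b) _).symm
      rw [← ha, ← hb]
      exact (congrArg E.p (add_smul a b x)).trans (map_add E.p _ _)
    | tmul a b =>
      rw [env_φ]
      refine Eq.trans ?_ (reg_smul _ _ _).symm
      refine (congrArg E.p (reg_smul a b x)).trans ?_
      exact (map_mul E.p _ _).trans (congrArg (· * E.p b.unop) (map_mul E.p a _))

theorem cor_reg (x : cor E.env (regularBimodule k C)) :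
    E.i (E.p (show C from x.1)) = (show C from x.1) := by
  have h := x.2
  rw [mem_cor, Algebra.TensorProduct.one_def, env_ψ] at h
  have h' := (reg_smul (k := k) _ _ _).symm.trans h
  change E.i 1 * (show C from x.1) * E.i 1 = (show C from x.1) at h'
  have e1 : E.i 1 * E.i 1 = E.i 1 := by rw [← E.hmul, one_mul]
  rw [← E.h2, E.h3, mul_assoc, e1, ← E.h3] at h'
  exact h'

theorem cor_iso : Nonempty
    (regularBimodule k A ≃ₗ[A ⊗[k] Aᵐᵒᵖ] cor E.env (regularBimodule k C)) := by
  let f : cor E.env (regularBimodule k C) →ₗ[A ⊗[k] Aᵐᵒᵖ] regularBimodule k A :=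
    { toFun := fun x => (toRes E.env).symm (regProj E x.1)
      map_add' := fun x y => by rw [← map_add, ← map_add]; rfl
      map_smul' := fun s x => by
        rw [cor_smul_val, map_smul, RingHom.id_apply]
        change (E.env.φ (E.env.ψ s)) • (toRes E.env).symm (regProj E x.1) = _
        rw [E.env.h1] }
  refine ⟨(LinearEquiv.ofBijective f ⟨?_, ?_⟩).symm⟩
  · intro x y h
    apply Subtype.ext
    have hx := cor_reg E x
    have hy := cor_reg E y
    exact hx.symm.trans ((congrArg E.i h).trans hy)
  · intro a
    refine ⟨⟨(show regularBimodule k C from E.i (show A from a)), ?_⟩, E.h1 _⟩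
    rw [mem_cor, Algebra.TensorProduct.one_def, env_ψ]
    refine (reg_smul _ _ _).trans ?_
    change E.i 1 * E.i _ * E.i 1 = E.i _
    rw [← E.hmul, ← E.hmul, one_mul, mul_one]

theorem periodic_factor (E : AFac k C A) (h : IsPeriodicAlgebra k C) : IsPeriodicAlgebra k A := by
  obtain ⟨n, hn, h⟩ := h
  obtain ⟨e⟩ := cor_iso E
  exact ⟨n, hn, hpes_of_syz ((((syz_of_hpes _ _ _ h).cor E.env).congr_left e).congr_right e.symm)⟩

end

section
variable (k A B : Type) [Field k] [Ring A] [Algebra k A] [Ring B] [Algebra k B]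

def facA : AFac k (A × B) A where
  p := AlgHom.fst k A B
  i := LinearMap.inl k A B
  hmul a b := by simp
  h1 s := rfl
  h2 r := by ext <;> simp
  h3 r := by ext <;> simp

def facB : AFac k (A × B) B where
  p := AlgHom.snd k A B
  i := LinearMap.inr k A B
  hmul a b := by simp
  h1 s := rfl
  h2 r := by ext <;> simp
  h3 r := by ext <;> simp

theorem periodic_prod (hA : IsPeriodicAlgebra k A) (hB : IsPeriodicAlgebra k B) :
    IsPeriodicAlgebra k (A × B) := by
  obtain ⟨n, hn, hA⟩ := hA
  obtain ⟨m, hm, hB⟩ := hB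
  have h1 := ((syz_of_hpes _ _ _ hA).mul m).res (facA k A B).env
  have h2 := ((syz_of_hpes _ _ _ hB).mul n).res (facB k A B).env
  rw [mul_comm] at h2
  have h3 := h1.prod h2
  let e := LinearEquiv.ofBijective ((regProj (facA k A B)).prod (regProj (facB k A B)))
    ⟨fun x y h => Prod.ext (congrArg Prod.fst h) (congrArg Prod.snd h),
      fun x => ⟨x, rfl⟩⟩
  exact ⟨n * m, Nat.mul_pos hn hm, hpes_of_syz ((h3.congr_left e).congr_right e.symm)⟩

end

end PerAux

/-- For finite-dimensional algebras `A`, `B` over a field `k`, the product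
algebra `A × B` is periodic if and only if both `A` and `B` are periodic. -/
theorem prod_isPeriodicAlgebra_iff (k A B : Type) [Field k] [Ring A] [Algebra k A]
    [Ring B] [Algebra k B] [FiniteDimensional k A] [FiniteDimensional k B] :
    IsPeriodicAlgebra k (A × B) ↔ IsPeriodicAlgebra k A ∧ IsPeriodicAlgebra k B := by
  exact ⟨fun h => ⟨PerAux.periodic_factor (PerAux.facA k A B) h,
    PerAux.periodic_factor (PerAux.facB k A B) h⟩, fun h => PerAux.periodic_prod k A B h.1 h.2⟩
end

section
/- Let A be a finite-dimensional algebra over a field k. If A is periodic, then A is self-injective: A is injective as a right module over itself, and also injective as a left module over itself. -/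
open TensorProduct

theorem aux_proj {S R P : Type} [Ring S] [Ring R] [AddCommGroup P] [Module R P] [Module S P]
    [Module S R] [IsScalarTower S R R] [IsScalarTower S R P]
    [Module.Projective S R] [Module.Projective R P] : Module.Projective S P := by
  obtain ⟨s, hs⟩ := Module.projective_def'.1 (inferInstance : Module.Projective R P)
  have : Module.Projective S (P →₀ R) := by
    classical
    exact Module.Projective.of_equiv' (finsuppLequivDFinsupp (ι := P) (M := R) S).symm
  refine Module.Projective.of_split (M := P →₀ R) (s.restrictScalars S)
    ((Finsupp.linearCombination R id).restrictScalars S) ?_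
  ext p
  exact LinearMap.congr_fun hs p

theorem aux_split {S : Type} [Ring S] (P : ℕ → Type) [∀ i, AddCommGroup (P i)]
    [∀ i, Module S (P i)] (d : ∀ i, P (i + 1) →ₗ[S] P i) (n : ℕ) (hn : 1 ≤ n)
    (hP : ∀ i ≤ n, Module.Projective S (P i))
    (h0 : Function.Surjective (d 0)) (hi : Function.Injective (d n))
    (hex : ∀ i < n, LinearMap.range (d (i + 1)) = LinearMap.ker (d i)) :
    ∃ r : P n →ₗ[S] P (n + 1), ∀ x, r (d n x) = x := by
  have key : ∀ i < n, Module.Projective S (LinearMap.range (d i)) ∧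
      ∃ q : P (i + 1) →ₗ[S] LinearMap.ker (d i), ∀ x, q x.1 = x := by
    have step : ∀ i, Module.Projective S (LinearMap.range (d i)) →
        ∃ q : P (i + 1) →ₗ[S] LinearMap.ker (d i), ∀ x, q x.1 = x := by
      intro i hpr
      obtain ⟨g, hg⟩ := Module.projective_lifting_property (d i).rangeRestrict
        LinearMap.id (d i).surjective_rangeRestrict
      have hg' : ∀ z, d i (g z) = z.1 := fun z =>
        congrArg Subtype.val (LinearMap.congr_fun hg z)
      refine ⟨LinearMap.codRestrict _ (LinearMap.id - g ∘ₗ (d i).rangeRestrict) ?_, ?_⟩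
      · intro x
        simp [hg']
      · intro x
        ext
        have : (d i).rangeRestrict x.1 = 0 := by
          ext
          exact x.2
        simp [this]
    intro i
    induction i with
    | zero =>
      intro h
      have hp : Module.Projective S (LinearMap.range (d 0)) := by
        have := hP 0 (by omega)
        rw [LinearMap.range_eq_top.2 h0]
        exact Module.Projective.of_equiv (LinearEquiv.ofTop ⊤ rfl).symm
      exact ⟨hp, step 0 hp⟩
    | succ i ih =>
      intro h
      obtain ⟨_, q, hq⟩ := ih (by omega)
      have hp : Module.Projective S (LinearMap.range (d (i + 1))) := by
        have := hP (i + 1) (by omega)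
        rw [hex i (by omega)]
        refine Module.Projective.of_split (LinearMap.ker (d i)).subtype q ?_
        ext x
        simp [hq]
      exact ⟨hp, step _ hp⟩
  obtain ⟨m, rfl⟩ : ∃ m, n = m + 1 := ⟨n - 1, by omega⟩
  obtain ⟨_, q, hq⟩ := key m (by omega)
  have hr := hex m (by omega)
  let e := LinearEquiv.ofInjective (d (m + 1)) hi
  refine ⟨e.symm.toLinearMap ∘ₗ (LinearEquiv.ofEq _ _ hr.symm).toLinearMap ∘ₗ q, ?_⟩
  intro x
  have hx : d (m + 1) x ∈ LinearMap.ker (d m) := hr ▸ ⟨x, rfl⟩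
  have := hq ⟨_, hx⟩
  simp only [LinearMap.comp_apply, LinearEquiv.coe_coe]
  rw [this, LinearEquiv.symm_apply_eq]
  rfl

theorem aux_ext {k S Q X Y : Type} [Field k] [Ring S] [Algebra k S] [AddCommGroup Q]
    [AddCommGroup X] [AddCommGroup Y] [Module k Q] [Module S Q] [IsScalarTower k S Q]
    [Module S X] [Module S Y] [Module k Y] [IsScalarTower k S Y]
    (i : X →ₗ[S] Y) (hi : Function.Injective i) (f : X →ₗ[S] Q) :
    ∃ F : Y →ₗ[k] Q, ∀ x, F (i x) = f x := by
  let _ : Module k X := Module.compHom X (algebraMap k S)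
  haveI : IsScalarTower k S X := ⟨fun c s x => by
    rw [Algebra.smul_def, mul_smul]; rfl⟩
  obtain ⟨g, hg⟩ := (i.restrictScalars k).exists_leftInverse_of_injective
    (LinearMap.ker_eq_bot.2 hi)
  refine ⟨f.restrictScalars k ∘ₗ g, fun x => ?_⟩
  have := LinearMap.congr_fun hg x
  simp at this
  simp [this]

theorem aux_left {k A P : Type} [Field k] [Ring A] [Algebra k A] [AddCommGroup P]
    [Module (A ⊗[k] Aᵐᵒᵖ) P] (r : P →+ A)
    (hr : ∀ (a : A) (p : P), r ((a ⊗ₜ[k] (1 : Aᵐᵒᵖ)) • p) = a * r p)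
    (v : P →₀ A ⊗[k] Aᵐᵒᵖ)
    (hv : ∀ (a : A) p, (a ⊗ₜ[k] (1 : Aᵐᵒᵖ)) * v p = ((1 : A) ⊗ₜ[k] MulOpposite.op a) * v p)
    (h1 : ∑ p ∈ v.support, r (v p • p) = 1) : Module.Injective A A := by
  refine ⟨fun X Y _ _ _ _ i hi f => ?_⟩
  letI : Module k Y := Module.compHom Y (algebraMap k A)
  haveI : IsScalarTower k A Y := ⟨fun c s x => by
    rw [Algebra.smul_def, mul_smul]; rfl⟩
  obtain ⟨F, hF⟩ := aux_ext (k := k) i hi f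
  let L : P → A →ₗ[k] A := fun p =>
    { toFun := fun a => r (((1 : A) ⊗ₜ[k] MulOpposite.op a) • p)
      map_add' := fun a b => by
        rw [MulOpposite.op_add, tmul_add, add_smul, map_add]
      map_smul' := fun c a => by
        have : (1 : A) ⊗ₜ[k] MulOpposite.op (c • a) =
            (algebraMap k A c ⊗ₜ[k] (1 : Aᵐᵒᵖ)) * ((1 : A) ⊗ₜ[k] MulOpposite.op a) := by
          rw [MulOpposite.op_smul, tmul_smul, smul_tmul']
          simp [Algebra.algebraMap_eq_smul_one]
        rw [this, mul_smul, hr, RingHom.id_apply, Algebra.smul_def] }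
  have hL : ∀ p a, L p a = r (((1 : A) ⊗ₜ[k] MulOpposite.op a) • p) := fun _ _ => rfl
  let H : P → Y → (A ⊗[k] Aᵐᵒᵖ →ₗ[k] A) := fun p y => TensorProduct.lift
    (LinearMap.mk₂ k (fun x b => x * L p (F (b.unop • y)))
      (fun x x' b => by rw [add_mul])
      (fun c x b => by rw [smul_mul_assoc])
      (fun x b b' => by rw [MulOpposite.unop_add, add_smul, map_add, map_add, mul_add])
      (fun c x b => by
        rw [MulOpposite.unop_smul, smul_assoc, map_smul, map_smul, mul_smul_comm]))
  have hH : ∀ p y x b, H p y (x ⊗ₜ b) = x * L p (F (b.unop • y)) := fun _ _ _ _ => rfl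
  have hadd : ∀ p y y' t, H p (y + y') t = H p y t + H p y' t := by
    intro p y y' t
    induction t with
    | zero => simp
    | tmul x b => simp only [hH, smul_add, map_add, mul_add]
    | add s t hs ht => rw [map_add, map_add, map_add, hs, ht]; abel
  have hsm : ∀ p (a : A) y t, H p (a • y) t = H p y (((1 : A) ⊗ₜ[k] MulOpposite.op a) * t) := by
    intro p a y t
    induction t with
    | zero => simp
    | tmul x b =>
      rw [Algebra.TensorProduct.tmul_mul_tmul, hH, hH, one_mul, MulOpposite.unop_mul,
        MulOpposite.unop_op, mul_smul]
    | add s t hs ht => rw [mul_add, map_add, map_add, hs, ht]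
  have hml : ∀ p (a : A) y t, H p y ((a ⊗ₜ[k] (1 : Aᵐᵒᵖ)) * t) = a * H p y t := by
    intro p a y t
    induction t with
    | zero => simp
    | tmul x b =>
      rw [Algebra.TensorProduct.tmul_mul_tmul, hH, hH, one_mul, mul_assoc]
    | add s t hs ht => rw [mul_add, map_add, map_add, hs, ht, mul_add]
  have hfx : ∀ p x t, H p (i x) t = r ((((1 : A) ⊗ₜ[k] MulOpposite.op (f x)) * t) • p) := by
    intro p x t
    induction t with
    | zero =>
      rw [map_zero, mul_zero]
      exact (map_zero r).symm.trans (congrArg r (zero_smul (A ⊗[k] Aᵐᵒᵖ) p).symm)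
    | tmul x' b =>
      rw [hH, ← map_smul i, hF, map_smul f, hL, ← hr, ← mul_smul,
        Algebra.TensorProduct.tmul_mul_tmul, Algebra.TensorProduct.tmul_mul_tmul]
      simp
    | add s t hs ht => rw [mul_add, map_add, hs, ht, add_smul, map_add]
  refine ⟨{ toFun := fun y => ∑ p ∈ v.support, H p y (v p)
            map_add' := fun y y' => by simp only [hadd, Finset.sum_add_distrib]
            map_smul' := fun a y => ?_ }, fun x => ?_⟩
  · simp only [hsm, ← hv, hml, RingHom.id_apply, smul_eq_mul, Finset.mul_sum]
  · change ∑ p ∈ v.support, H p (i x) (v p) = f x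
    simp only [hfx, ← hv, mul_smul, hr]
    rw [← Finset.mul_sum, h1, mul_one]

theorem aux_right {k A P : Type} [Field k] [Ring A] [Algebra k A] [AddCommGroup P]
    [Module (A ⊗[k] Aᵐᵒᵖ) P] (r : P →+ A)
    (hr : ∀ (a : A) (p : P), r (((1 : A) ⊗ₜ[k] MulOpposite.op a) • p) = r p * a)
    (v : P →₀ A ⊗[k] Aᵐᵒᵖ)
    (hv : ∀ (a : A) p, (a ⊗ₜ[k] (1 : Aᵐᵒᵖ)) * v p = ((1 : A) ⊗ₜ[k] MulOpposite.op a) * v p)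
    (h1 : ∑ p ∈ v.support, r (v p • p) = 1) : Module.Injective Aᵐᵒᵖ A := by
  refine ⟨fun X Y _ _ _ _ i hi f => ?_⟩
  letI : Module k Y := Module.compHom Y (algebraMap k Aᵐᵒᵖ)
  haveI : IsScalarTower k Aᵐᵒᵖ Y := ⟨fun c s x => by
    rw [Algebra.smul_def, mul_smul]; rfl⟩
  obtain ⟨F, hF⟩ := aux_ext (k := k) i hi f
  let L : P → A →ₗ[k] A := fun p =>
    { toFun := fun a => r ((a ⊗ₜ[k] (1 : Aᵐᵒᵖ)) • p)
      map_add' := fun a b => by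
        rw [add_tmul, add_smul, map_add]
      map_smul' := fun c a => by
        have : (c • a) ⊗ₜ[k] (1 : Aᵐᵒᵖ) =
            ((1 : A) ⊗ₜ[k] MulOpposite.op (algebraMap k A c)) * (a ⊗ₜ[k] (1 : Aᵐᵒᵖ)) := by
          rw [smul_tmul, Algebra.TensorProduct.tmul_mul_tmul, one_mul, mul_one,
            Algebra.algebraMap_eq_smul_one, MulOpposite.op_smul, MulOpposite.op_one]
        rw [this, mul_smul, hr, RingHom.id_apply, Algebra.smul_def, Algebra.commutes] }
  have hL : ∀ p a, L p a = r ((a ⊗ₜ[k] (1 : Aᵐᵒᵖ)) • p) := fun _ _ => rfl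
  let H : P → Y → (A ⊗[k] Aᵐᵒᵖ →ₗ[k] A) := fun p y => TensorProduct.lift
    (LinearMap.mk₂ k (fun x b => L p (F (MulOpposite.op x • y)) * b.unop)
      (fun x x' b => by rw [MulOpposite.op_add, add_smul, map_add, map_add, add_mul])
      (fun c x b => by
        rw [MulOpposite.op_smul, smul_assoc, map_smul, map_smul, smul_mul_assoc])
      (fun x b b' => by rw [MulOpposite.unop_add, mul_add])
      (fun c x b => by rw [MulOpposite.unop_smul, mul_smul_comm]))
  have hH : ∀ p y x b, H p y (x ⊗ₜ b) = L p (F (MulOpposite.op x • y)) * b.unop :=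
    fun _ _ _ _ => rfl
  have hadd : ∀ p y y' t, H p (y + y') t = H p y t + H p y' t := by
    intro p y y' t
    induction t with
    | zero => simp
    | tmul x b => simp only [hH, smul_add, map_add, add_mul]
    | add s t hs ht => rw [map_add, map_add, map_add, hs, ht]; abel
  have hsm : ∀ p (a : A) y t, H p (MulOpposite.op a • y) t =
      H p y ((a ⊗ₜ[k] (1 : Aᵐᵒᵖ)) * t) := by
    intro p a y t
    induction t with
    | zero => simp
    | tmul x b =>
      rw [Algebra.TensorProduct.tmul_mul_tmul, hH, hH, one_mul, MulOpposite.op_mul, mul_smul]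
    | add s t hs ht => rw [mul_add, map_add, map_add, hs, ht]
  have hml : ∀ p (a : A) y t, H p y (((1 : A) ⊗ₜ[k] MulOpposite.op a) * t) = H p y t * a := by
    intro p a y t
    induction t with
    | zero => simp
    | tmul x b =>
      rw [Algebra.TensorProduct.tmul_mul_tmul, hH, hH, one_mul, MulOpposite.unop_mul,
        MulOpposite.unop_op, mul_assoc]
    | add s t hs ht => rw [mul_add, map_add, map_add, hs, ht, add_mul]
  have hfx : ∀ p x t, H p (i x) t = r (((f x ⊗ₜ[k] (1 : Aᵐᵒᵖ)) * t) • p) := by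
    intro p x t
    induction t with
    | zero =>
      rw [map_zero, mul_zero]
      exact (map_zero r).symm.trans (congrArg r (zero_smul (A ⊗[k] Aᵐᵒᵖ) p).symm)
    | tmul x' b =>
      rw [hH, ← map_smul i, hF, map_smul f, hL, ← hr, ← mul_smul,
        Algebra.TensorProduct.tmul_mul_tmul, Algebra.TensorProduct.tmul_mul_tmul]
      simp
    | add s t hs ht => rw [mul_add, map_add, hs, ht, add_smul, map_add]
  refine ⟨{ toFun := fun y => ∑ p ∈ v.support, H p y (v p)
            map_add' := fun y y' => by simp only [hadd, Finset.sum_add_distrib]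
            map_smul' := fun a y => ?_ }, fun x => ?_⟩
  · obtain ⟨a, rfl⟩ := MulOpposite.op_surjective a
    simp only [hsm, hv, hml, RingHom.id_apply, MulOpposite.smul_eq_mul_unop,
      MulOpposite.unop_op, Finset.sum_mul]
  · change ∑ p ∈ v.support, H p (i x) (v p) = f x
    simp only [hfx, hv, mul_smul, hr]
    rw [← Finset.sum_mul, h1, one_mul]

theorem aux_projL (k A : Type) [Field k] [Ring A] [Algebra k A] :
    letI : Module A (A ⊗[k] Aᵐᵒᵖ) := Module.compHom (A ⊗[k] Aᵐᵒᵖ)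
      (Algebra.TensorProduct.includeLeftRingHom : A →+* A ⊗[k] Aᵐᵒᵖ)
    Module.Projective A (A ⊗[k] Aᵐᵒᵖ) := by
  have hf : Module.Projective A (A ⊗[k] Aᵐᵒᵖ) := inferInstance
  have : (Module.compHom (A ⊗[k] Aᵐᵒᵖ)
      (Algebra.TensorProduct.includeLeftRingHom : A →+* A ⊗[k] Aᵐᵒᵖ)) =
      (TensorProduct.leftModule : Module A (A ⊗[k] Aᵐᵒᵖ)) := by
    refine Module.ext' _ _ fun a t => ?_
    change (a ⊗ₜ[k] (1 : Aᵐᵒᵖ)) * t = a • t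
    induction t with
    | zero => simp
    | tmul x y => simp [smul_tmul']
    | add s t hs ht => rw [mul_add, smul_add, hs, ht]
  change @Module.Projective A _ (A ⊗[k] Aᵐᵒᵖ) _ (Module.compHom (A ⊗[k] Aᵐᵒᵖ)
      (Algebra.TensorProduct.includeLeftRingHom : A →+* A ⊗[k] Aᵐᵒᵖ))
  rw [this]
  exact hf

theorem aux_projR (k A : Type) [Field k] [Ring A] [Algebra k A] :
    letI : Module Aᵐᵒᵖ (A ⊗[k] Aᵐᵒᵖ) := Module.compHom (A ⊗[k] Aᵐᵒᵖ)
      (Algebra.TensorProduct.includeRight : Aᵐᵒᵖ →ₐ[k] A ⊗[k] Aᵐᵒᵖ).toRingHom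
    Module.Projective Aᵐᵒᵖ (A ⊗[k] Aᵐᵒᵖ) := by
  let inst : Module Aᵐᵒᵖ (A ⊗[k] Aᵐᵒᵖ) := Module.compHom (A ⊗[k] Aᵐᵒᵖ)
      (Algebra.TensorProduct.includeRight : Aᵐᵒᵖ →ₐ[k] A ⊗[k] Aᵐᵒᵖ).toRingHom
  have hf : @Module.Projective Aᵐᵒᵖ _ (Aᵐᵒᵖ ⊗[k] A) _ TensorProduct.leftModule := inferInstance
  refine @Module.Projective.of_equiv Aᵐᵒᵖ Aᵐᵒᵖ _ _ (Aᵐᵒᵖ ⊗[k] A) (A ⊗[k] Aᵐᵒᵖ) _ _ _ inst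
    (RingHom.id _) (RingHom.id _) _ _ ?_ hf
  refine
    { (TensorProduct.comm k Aᵐᵒᵖ A).toAddEquiv with
      map_smul' := fun a t => ?_ }
  change TensorProduct.comm k Aᵐᵒᵖ A (a • t) =
    ((1 : A) ⊗ₜ[k] a) * TensorProduct.comm k Aᵐᵒᵖ A t
  induction t with
  | zero => simp
  | tmul x y => simp [smul_tmul']
  | add s t hs ht => rw [smul_add, map_add, map_add, mul_add, hs, ht]

/-- Retraction after restricting scalars along a ring hom. -/
theorem aux_retract {S R : Type} [Ring S] [Ring R] (φ : S →+* R)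
    (hR : letI : Module S R := Module.compHom R φ; Module.Projective S R)
    (P : ℕ → ModuleCat.{0} R) (d : ∀ i, P (i + 1) →ₗ[R] P i) (n : ℕ) (hn : 1 ≤ n)
    (hP0 : letI : Module S (P 0) := Module.compHom (P 0) φ; Module.Projective S (P 0))
    (hP : ∀ i, 1 ≤ i → i ≤ n → Module.Projective R (P i))
    (h0 : Function.Surjective (d 0)) (hi : Function.Injective (d n))
    (hex : ∀ i < n, LinearMap.range (d (i + 1)) = LinearMap.ker (d i)) :
    ∃ r : P n →+ P (n + 1), (∀ x, r (d n x) = x) ∧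
      ∀ (s : S) x, r (φ s • x) = φ s • r x := by
  letI : Module S R := Module.compHom R φ
  letI : ∀ i, Module S (P i) := fun i => Module.compHom (P i) φ
  haveI : IsScalarTower S R R := ⟨fun s a b => mul_assoc (φ s) a b⟩
  haveI : ∀ i, IsScalarTower S R (P i) := fun i => ⟨fun s a b => mul_smul (φ s) a b⟩
  haveI : Module.Projective S R := hR
  obtain ⟨r, hr⟩ := aux_split (S := S) (fun i => P i) (fun i => (d i).restrictScalars S) n hn
    (fun i hin => by
      rcases Nat.eq_zero_or_pos i with rfl | hpos
      · exact hP0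
      · haveI := hP i hpos hin
        exact aux_proj (R := R)) h0 hi
    (fun i hin => by
      ext x
      exact SetLike.ext_iff.1 (hex i hin) x)
  exact ⟨r.toAddMonoidHom, hr, fun s x => r.map_smul s x⟩

/-- A periodic finite-dimensional algebra is self-injective: `A` is
injective as a left module over itself and as a right module over itself (a right
`A`-module being a left `Aᵐᵒᵖ`-module). -/
theorem isPeriodicAlgebra_selfInjective (k A : Type) [Field k] [Ring A] [Algebra k A]
    [FiniteDimensional k A] (h : IsPeriodicAlgebra k A) :
    Module.Injective A A ∧ Module.Injective Aᵐᵒᵖ A := by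
  obtain ⟨n, hn, P, d, e0, e, hP, h0, hi, hex⟩ := h
  letI : Module (A ⊗[k] Aᵐᵒᵖ) A := TensorProduct.Algebra.module
  change (P 0 : Type) ≃ₗ[A ⊗[k] Aᵐᵒᵖ] A at e0
  change A ≃ₗ[A ⊗[k] Aᵐᵒᵖ] P (n + 1) at e
  have hs : ∀ (a : A) (b : Aᵐᵒᵖ) (m : A), (a ⊗ₜ[k] b) • m = a * (m * b.unop) :=
    fun _ _ _ => rfl
  haveI := hP n hn le_rfl
  obtain ⟨s, hsec⟩ := Module.projective_def'.1
    (inferInstance : Module.Projective (A ⊗[k] Aᵐᵒᵖ) (P n))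
  let u : P n := d n (e 1)
  have hu : ∀ a : A, (a ⊗ₜ[k] (1 : Aᵐᵒᵖ)) • u = ((1 : A) ⊗ₜ[k] MulOpposite.op a) • u := by
    intro a
    simp only [u]
    rw [← map_smul, ← map_smul, ← map_smul, ← map_smul, hs, hs]
    simp
  have hv : ∀ (a : A) p, (a ⊗ₜ[k] (1 : Aᵐᵒᵖ)) * s u p =
      ((1 : A) ⊗ₜ[k] MulOpposite.op a) * s u p := by
    intro a p
    have := congrArg (fun w => s w p) (hu a)
    simpa using this
  have hsum : ∑ p ∈ (s u).support, s u p • p = u := LinearMap.congr_fun hsec u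
  constructor
  · let φ : A →+* A ⊗[k] Aᵐᵒᵖ := Algebra.TensorProduct.includeLeftRingHom
    obtain ⟨r, hr, hrs⟩ := aux_retract φ (by
        exact aux_projL k A) P d n hn (by
        letI : Module A (P 0) := Module.compHom (P 0) φ
        refine Module.Projective.of_equiv' (M := A)
          { e0.symm with
            map_smul' := fun a x => ?_ }
        have := e0.symm.map_smul (φ a) x
        rw [show φ a • x = a • x by
          change a * (x * 1) = a * x
          rw [mul_one]] at this
        exact this) hP h0 hi hex
    refine aux_left (k := k) (P := P n) (e.symm.toAddEquiv.toAddMonoidHom.comp r) ?_ (s u) hv ?_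
    · intro a p
      change e.symm (r (φ a • p)) = a * e.symm (r p)
      rw [hrs, map_smul]
      change a * (_ * 1) = _
      rw [mul_one]
    · rw [← map_sum, hsum]
      change e.symm (r (d n (e 1))) = 1
      rw [hr, e.symm_apply_apply]
  · let φ : Aᵐᵒᵖ →+* A ⊗[k] Aᵐᵒᵖ :=
      (Algebra.TensorProduct.includeRight : Aᵐᵒᵖ →ₐ[k] A ⊗[k] Aᵐᵒᵖ).toRingHom
    obtain ⟨r, hr, hrs⟩ := aux_retract φ (by
        exact aux_projR k A) P d n hn (by
        letI : Module Aᵐᵒᵖ (P 0) := Module.compHom (P 0) φ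
        refine Module.Projective.of_equiv' (M := Aᵐᵒᵖ)
          { (MulOpposite.opAddEquiv (α := A)).symm.trans e0.symm.toAddEquiv with
            map_smul' := fun a x => ?_ }
        have := e0.symm.map_smul (φ a) x.unop
        rw [show φ a • x.unop = (a • x).unop by
          change 1 * (x.unop * a.unop) = x.unop * a.unop
          rw [one_mul]] at this
        exact this) hP h0 hi hex
    refine aux_right (k := k) (P := P n) (e.symm.toAddEquiv.toAddMonoidHom.comp r) ?_ (s u) hv ?_
    · intro a p
      change e.symm (r (φ (MulOpposite.op a) • p)) = e.symm (r p) * a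
      rw [hrs, map_smul]
      change 1 * (_ * a) = _
      rw [one_mul]
    · rw [← map_sum, hsum]
      change e.symm (r (d n (e 1))) = 1
      rw [hr, e.symm_apply_apply]
end

section
/- Let A and B be finite-dimensional algebras over a field k, and suppose A and B are Morita equivalent over k, i.e., there is a k-linear equivalence between the category of A-modules and the category of B-modules. Then A is periodic if and only if B is periodic. -/
open TensorProduct CategoryTheory

namespace MoritaPeriodic

open TensorProduct CategoryTheory MulOpposite

universe u v w

structure MCtx (k A B : Type) [Field k] [Ring A] [Algebra k A] [Ring B] [Algebra k B]
    {C : Type v} [Category.{u} C] [Preadditive C] [Linear k C] (a b : C) where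
  α : A ≃ₗ[k] (a ⟶ a)
  α_mul : ∀ x y, α (x * y) = α x ≫ α y
  α_one : α 1 = 𝟙 a
  β : B ≃ₗ[k] (b ⟶ b)
  β_mul : ∀ x y, β (x * y) = β x ≫ β y
  β_one : β 1 = 𝟙 b
  n : ℕ
  q : Fin n → (a ⟶ b)
  p : Fin n → (b ⟶ a)
  hb : ∑ i, p i ≫ q i = 𝟙 b
  m : ℕ
  q' : Fin m → (a ⟶ b)
  p' : Fin m → (b ⟶ a)
  ha : ∑ i, q' i ≫ p' i = 𝟙 a

variable {k A B : Type} [Field k] [Ring A] [Algebra k A] [Ring B] [Algebra k B]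
    {C : Type v} [Category.{u} C] [Preadditive C] [Linear k C] {a b : C}

def MCtx.swap (c : MCtx k A B a b) : MCtx k B A b a where
  α := c.β
  α_mul := c.β_mul
  α_one := c.β_one
  β := c.α
  β_mul := c.α_mul
  β_one := c.α_one
  n := c.m
  q := c.p'
  p := c.q'
  hb := c.ha
  m := c.n
  q' := c.p
  p' := c.q
  ha := c.hb

variable (c : MCtx k A B a b)

lemma MCtx.symm_comp (f : a ⟶ a) (x : A) : c.α.symm (c.α x ≫ f) = x * c.α.symm f := by
  apply c.α.injective
  simp [c.α_mul]

lemma MCtx.comp_symm (f : a ⟶ a) (x : A) : c.α.symm (f ≫ c.α x) = c.α.symm f * x := by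
  apply c.α.injective
  simp [c.α_mul]

lemma MCtx.α_smul_one_comp (r : k) {z : C} (f : a ⟶ z) : c.α (r • 1) ≫ f = r • f := by
  simp [c.α_one]

lemma MCtx.comp_α_smul_one (r : k) {z : C} (f : z ⟶ a) : f ≫ c.α (r • 1) = r • f := by
  simp [c.α_one]

def Tsub (X : Type w) [AddCommGroup X] [Module (A ⊗[k] Aᵐᵒᵖ) X] :
    AddSubgroup ((a ⟶ b) →+ (b ⟶ a) →+ X) where
  carrier := {f | ∀ x y q p, f (c.α x ≫ q) (p ≫ c.α y) = (x ⊗ₜ[k] op y) • f q p}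
  add_mem' := by
    intro f g hf hg x y q p
    simp [hf x y q p, hg x y q p]
  zero_mem' := by intro x y q p; simp
  neg_mem' := by
    intro f hf x y q p
    simp [hf x y q p]

def TT (X : Type w) [AddCommGroup X] [Module (A ⊗[k] Aᵐᵒᵖ) X] : Type (max u w) := ↥(Tsub c X)

section
variable (X : Type w) [AddCommGroup X] [Module (A ⊗[k] Aᵐᵒᵖ) X]

instance : AddCommGroup (TT c X) := inferInstanceAs (AddCommGroup ↥(Tsub c X))

variable {X}
def TT.ev (f : TT c X) (q : a ⟶ b) (p : b ⟶ a) : X := f.1 q p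

variable {c}
@[ext] lemma TT.ext {f g : TT c X} (h : ∀ q p, f.ev c q p = g.ev c q p) : f = g := by
  apply Subtype.ext
  ext q p
  exact h q p

lemma TT.law (f : TT c X) (x y : A) (q : a ⟶ b) (p : b ⟶ a) :
    f.ev c (c.α x ≫ q) (p ≫ c.α y) = (x ⊗ₜ[k] op y) • f.ev c q p := f.2 x y q p

@[simp] lemma TT.add_ev (f g : TT c X) (q : a ⟶ b) (p : b ⟶ a) :
    (f + g).ev c q p = f.ev c q p + g.ev c q p := rfl
@[simp] lemma TT.zero_ev (q : a ⟶ b) (p : b ⟶ a) : (0 : TT c X).ev c q p = 0 := rfl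
@[simp] lemma TT.ev_add_left (f : TT c X) (q q' : a ⟶ b) (p : b ⟶ a) :
    f.ev c (q + q') p = f.ev c q p + f.ev c q' p := by simp [TT.ev]
@[simp] lemma TT.ev_add_right (f : TT c X) (q : a ⟶ b) (p p' : b ⟶ a) :
    f.ev c q (p + p') = f.ev c q p + f.ev c q p' := by simp [TT.ev]
@[simp] lemma TT.ev_zero_left (f : TT c X) (p : b ⟶ a) : f.ev c 0 p = 0 := by simp [TT.ev]
@[simp] lemma TT.ev_zero_right (f : TT c X) (q : a ⟶ b) : f.ev c q 0 = 0 := by simp [TT.ev]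
lemma TT.ev_sum_left (f : TT c X) {ι : Type*} (s : Finset ι) (q : ι → (a ⟶ b)) (p : b ⟶ a) :
    f.ev c (∑ i ∈ s, q i) p = ∑ i ∈ s, f.ev c (q i) p := by simp [TT.ev]
lemma TT.ev_sum_right (f : TT c X) {ι : Type*} (s : Finset ι) (q : a ⟶ b) (p : ι → (b ⟶ a)) :
    f.ev c q (∑ i ∈ s, p i) = ∑ i ∈ s, f.ev c q (p i) := by simp [TT.ev]
lemma TT.sum_ev {ι : Type*} (s : Finset ι) (f : ι → TT c X) (q : a ⟶ b) (p : b ⟶ a) :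
    (∑ i ∈ s, f i).ev c q p = ∑ i ∈ s, (f i).ev c q p := by
  classical
  induction s using Finset.induction_on with
  | empty => simp
  | insert i s hi ih => simp [Finset.sum_insert hi, ih]

variable (c)
def TT.mk (f : (a ⟶ b) → (b ⟶ a) → X)
    (h1 : ∀ q q' p, f (q + q') p = f q p + f q' p)
    (h2 : ∀ q p p', f q (p + p') = f q p + f q p')
    (h3 : ∀ x y q p, f (c.α x ≫ q) (p ≫ c.α y) = (x ⊗ₜ[k] op y) • f q p) : TT c X :=
  ⟨AddMonoidHom.mk' (fun q => AddMonoidHom.mk' (f q) (h2 q))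
    (by intro q q'; ext p; exact h1 q q' p), h3⟩

@[simp] lemma TT.mk_ev (f : (a ⟶ b) → (b ⟶ a) → X) (h1 h2 h3) (q : a ⟶ b) (p : b ⟶ a) :
    (TT.mk c f h1 h2 h3).ev c q p = f q p := rfl

variable {c}
lemma TT.ev_smul_left (f : TT c X) (r : k) (q : a ⟶ b) (p : b ⟶ a) :
    f.ev c (r • q) p = ((r • (1 : A)) ⊗ₜ[k] op (1 : A)) • f.ev c q p := by
  rw [← TT.law, c.α_smul_one_comp, c.α_one, Category.comp_id]

lemma TT.ev_smul_right (f : TT c X) (r : k) (q : a ⟶ b) (p : b ⟶ a) :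
    f.ev c q (r • p) = f.ev c (r • q) p := by
  have h := TT.law f 1 (r • 1) q p
  rw [c.comp_α_smul_one, c.α_one, Category.id_comp] at h
  rw [h, TT.ev_smul_left, op_smul, TensorProduct.tmul_smul, ← TensorProduct.smul_tmul']

variable (c X)
abbrev TT.modK : Module k (TT c X) where
  smul r f := TT.mk c (fun q p => f.ev c (r • q) p) (by simp) (by simp) (by
    intro x y q p; rw [← TT.law, Linear.comp_smul])
  one_smul f := by ext q p; change f.ev c _ _ = _; simp
  mul_smul r s f := by
    ext q p; change f.ev c _ _ = f.ev c _ _; rw [← mul_smul, mul_comm]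
  smul_zero r := by ext q p; rfl
  smul_add r f g := by ext q p; rfl
  add_smul r s f := by
    ext q p; change f.ev c _ _ = f.ev c _ _ + f.ev c _ _; rw [add_smul, TT.ev_add_left]
  zero_smul f := by ext q p; change f.ev c _ _ = _; simp

abbrev TT.modB : Module B (TT c X) where
  smul r f := TT.mk c (fun q p => f.ev c (q ≫ c.β r) p) (by simp) (by simp) (by
    intro x y q p; rw [← TT.law, Category.assoc])
  one_smul f := by ext q p; change f.ev c _ _ = _; simp [c.β_one]
  mul_smul r s f := by
    ext q p; change f.ev c _ _ = f.ev c _ _; rw [c.β_mul, Category.assoc]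
  smul_zero r := by ext q p; rfl
  smul_add r f g := by ext q p; rfl
  add_smul r s f := by
    ext q p; change f.ev c _ _ = f.ev c _ _ + f.ev c _ _; simp
  zero_smul f := by ext q p; change f.ev c _ _ = _; simp

abbrev TT.modBop : Module Bᵐᵒᵖ (TT c X) where
  smul r f := TT.mk c (fun q p => f.ev c q (c.β r.unop ≫ p)) (by simp) (by simp) (by
    intro x y q p; rw [← TT.law, Category.assoc])
  one_smul f := by ext q p; change f.ev c _ _ = _; simp [c.β_one]
  mul_smul r s f := by
    ext q p; change f.ev c _ _ = f.ev c _ _; rw [unop_mul, c.β_mul, Category.assoc]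
  smul_zero r := by ext q p; rfl
  smul_add r f g := by ext q p; rfl
  add_smul r s f := by
    ext q p; change f.ev c _ _ = f.ev c _ _ + f.ev c _ _; simp
  zero_smul f := by ext q p; change f.ev c _ _ = _; simp

noncomputable instance TT.modE : Module (B ⊗[k] Bᵐᵒᵖ) (TT c X) :=
  letI := TT.modK c X
  letI := TT.modB c X
  letI := TT.modBop c X
  haveI : IsScalarTower k B (TT c X) := ⟨by
    intro r s f; ext q p; change f.ev c _ _ = f.ev c _ _; simp⟩
  haveI : IsScalarTower k Bᵐᵒᵖ (TT c X) := ⟨by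
    intro r s f; ext q p; change f.ev c _ _ = f.ev c _ _; simp [TT.ev_smul_right]⟩
  haveI : SMulCommClass B Bᵐᵒᵖ (TT c X) := ⟨by
    intro r s f; ext q p; rfl⟩
  TensorProduct.Algebra.module

variable {c X}
@[simp] lemma TT.tmul_smul_ev (f : TT c X) (x : B) (y : Bᵐᵒᵖ) (q : a ⟶ b) (p : b ⟶ a) :
    ((x ⊗ₜ[k] y) • f).ev c q p = f.ev c (q ≫ c.β x) (c.β y.unop ≫ p) := rfl

end

/-- build linear maps over the enveloping algebra -/
def mkLin {X Y : Type*} [AddCommGroup X] [Module (A ⊗[k] Aᵐᵒᵖ) X] [AddCommGroup Y]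
    [Module (A ⊗[k] Aᵐᵒᵖ) Y] (f : X → Y) (h : ∀ x y, f (x + y) = f x + f y)
    (h' : ∀ (s t : A) x, f ((s ⊗ₜ[k] op t) • x) = (s ⊗ₜ[k] op t) • f x) :
    X →ₗ[A ⊗[k] Aᵐᵒᵖ] Y where
  toFun := f
  map_add' := h
  map_smul' r x := by
    have hz : f ((0 : A ⊗[k] Aᵐᵒᵖ) • x) = (0 : A ⊗[k] Aᵐᵒᵖ) • f x := by
      have e : (0 : A ⊗[k] Aᵐᵒᵖ) = (0 : A) ⊗ₜ[k] op (0 : A) :=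
        (TensorProduct.zero_tmul _ _).symm
      rw [e]
      exact h' 0 0 x
    induction r using TensorProduct.induction_on with
    | zero => exact hz
    | tmul s t => exact h' s t.unop x
    | add s t hs ht => simp only [add_smul, h, hs, ht, RingHom.id_apply] at *

@[simp] lemma mkLin_apply {X Y : Type*} [AddCommGroup X] [Module (A ⊗[k] Aᵐᵒᵖ) X] [AddCommGroup Y]
    [Module (A ⊗[k] Aᵐᵒᵖ) Y] (f : X → Y) (h h') (x : X) :
    mkLin (k := k) (A := A) f h h' x = f x := rfl

section
variable {X Y Z : Type*} [AddCommGroup X] [Module (A ⊗[k] Aᵐᵒᵖ) X] [AddCommGroup Y]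
    [Module (A ⊗[k] Aᵐᵒᵖ) Y]  [AddCommGroup Z] [Module (A ⊗[k] Aᵐᵒᵖ) Z]

noncomputable def TT.map (g : X →ₗ[A ⊗[k] Aᵐᵒᵖ] Y) : TT c X →ₗ[B ⊗[k] Bᵐᵒᵖ] TT c Y :=
  mkLin (fun f => TT.mk c (fun q p => g (f.ev c q p)) (by simp) (by simp)
    (by intros; rw [TT.law, map_smul]))
    (by intro f g; ext; simp) (by intro s t f; ext; simp)

@[simp] lemma TT.map_ev (g : X →ₗ[A ⊗[k] Aᵐᵒᵖ] Y) (f : TT c X) (q : a ⟶ b) (p : b ⟶ a) :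
    (TT.map c g f).ev c q p = g (f.ev c q p) := rfl

noncomputable def MCtx.coef (i j : Fin c.n) (q : a ⟶ b) (p : b ⟶ a) : A ⊗[k] Aᵐᵒᵖ :=
  c.α.symm (q ≫ c.p i) ⊗ₜ[k] op (c.α.symm (c.q j ≫ p))

lemma TT.expand (f : TT c X) (q : a ⟶ b) (p : b ⟶ a) :
    f.ev c q p = ∑ i, ∑ j, c.coef i j q p • f.ev c (c.q i) (c.p j) := by
  have hq : q = ∑ i, (q ≫ c.p i) ≫ c.q i := by
    simp only [Category.assoc]
    rw [← Preadditive.comp_sum, c.hb, Category.comp_id]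
  have hp : p = ∑ i, c.p i ≫ (c.q i ≫ p) := by
    simp only [← Category.assoc]
    rw [← Preadditive.sum_comp, c.hb, Category.id_comp]
  conv_lhs => rw [hq, hp]
  simp only [TT.ev_sum_left, TT.ev_sum_right, MCtx.coef, ← TT.law, LinearEquiv.apply_symm_apply]
  exact Finset.sum_comm

variable (X) in
/-- evaluate at generators -/
lemma TT.small {X : Type} [AddCommGroup X] [Module (A ⊗[k] Aᵐᵒᵖ) X] : Small.{0} (TT c X) := by
  refine small_of_injective (f := fun (f : TT c X) (i j : Fin c.n) => f.ev c (c.q i) (c.p j)) ?_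
  intro f g h
  ext q p
  rw [TT.expand c f, TT.expand c g]
  simp only [funext_iff] at h
  simp [h]

lemma TT.lift (g : X →ₗ[A ⊗[k] Aᵐᵒᵖ] Y) (f : TT c Y) (h : ∀ q p, f.ev c q p ∈ LinearMap.range g) :
    ∃ f', TT.map c g f' = f := by
  choose x hx using fun i j => h (c.q i) (c.p j)
  have h1 : ∀ q q' p, ∑ i, ∑ j, c.coef i j (q + q') p • x i j =
      ∑ i, ∑ j, c.coef i j q p • x i j + ∑ i, ∑ j, c.coef i j q' p • x i j := by
    intro q q' p
    simp [MCtx.coef, TensorProduct.add_tmul, add_smul, Finset.sum_add_distrib]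
  have h2 : ∀ q p p', ∑ i, ∑ j, c.coef i j q (p + p') • x i j =
      ∑ i, ∑ j, c.coef i j q p • x i j + ∑ i, ∑ j, c.coef i j q p' • x i j := by
    intro q q' p
    simp [MCtx.coef, TensorProduct.tmul_add, add_smul, Finset.sum_add_distrib]
  have h3 : ∀ s t q p, ∑ i, ∑ j, c.coef i j (c.α s ≫ q) (p ≫ c.α t) • x i j =
      (s ⊗ₜ[k] op t) • ∑ i, ∑ j, c.coef i j q p • x i j := by
    intro s t q p
    simp only [MCtx.coef, Finset.smul_sum, ← mul_smul, Algebra.TensorProduct.tmul_mul_tmul,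
      ← op_mul, ← Category.assoc, c.comp_symm]
    simp only [Category.assoc, c.symm_comp]
  refine ⟨TT.mk c (fun q p => ∑ i, ∑ j, c.coef i j q p • x i j) h1 h2 h3, ?_⟩
  ext q p
  rw [TT.map_ev, TT.mk_ev, TT.expand c f]
  simp [hx]

lemma TT.map_surjective (g : X →ₗ[A ⊗[k] Aᵐᵒᵖ] Y) (h : Function.Surjective g) :
    Function.Surjective (TT.map c g) := fun f => TT.lift c g f (fun _ _ => h _)

lemma TT.map_injective (g : X →ₗ[A ⊗[k] Aᵐᵒᵖ] Y) (h : Function.Injective g) :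
    Function.Injective (TT.map c g) := by
  intro f f' hf
  ext q p
  apply h
  rw [← TT.map_ev, hf, TT.map_ev]

lemma TT.map_exact (g : X →ₗ[A ⊗[k] Aᵐᵒᵖ] Y) (g' : Y →ₗ[A ⊗[k] Aᵐᵒᵖ] Z)
    (h : LinearMap.range g = LinearMap.ker g') :
    LinearMap.range (TT.map c g) = LinearMap.ker (TT.map c g') := by
  ext f
  constructor
  · rintro ⟨f, rfl⟩
    rw [LinearMap.mem_ker]
    ext q p
    have : g (f.ev c q p) ∈ LinearMap.ker g' := h ▸ ⟨_, rfl⟩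
    simpa using this
  · intro hf
    apply TT.lift
    intro q p
    rw [h, LinearMap.mem_ker, ← TT.map_ev, hf, TT.zero_ev]

end

section
@[simp] lemma MCtx.swap_α : c.swap.α = c.β := rfl
@[simp] lemma MCtx.swap_β : c.swap.β = c.α := rfl

section coev
variable {X : Type w} [AddCommGroup X] [Module (A ⊗[k] Aᵐᵒᵖ) X]

noncomputable def coevAux (x : X) (p : b ⟶ a) (q : a ⟶ b) : TT c X :=
  TT.mk c (fun q0 p0 => (c.α.symm (q0 ≫ p) ⊗ₜ[k] op (c.α.symm (q ≫ p0))) • x)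
    (by intros; simp [TensorProduct.add_tmul, add_smul])
    (by intros; simp [TensorProduct.tmul_add, add_smul])
    (by
      intro s t q0 p0
      simp only [← mul_smul, Algebra.TensorProduct.tmul_mul_tmul,
        ← op_mul, ← Category.assoc, c.comp_symm]
      simp only [Category.assoc, c.symm_comp])

@[simp] lemma coevAux_ev (x : X) (p : b ⟶ a) (q : a ⟶ b) (q0 : a ⟶ b) (p0 : b ⟶ a) :
    (coevAux c x p q).ev c q0 p0 = (c.α.symm (q0 ≫ p) ⊗ₜ[k] op (c.α.symm (q ≫ p0))) • x := rfl

variable (X) in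
noncomputable def coev : X →ₗ[A ⊗[k] Aᵐᵒᵖ] TT c.swap (TT c X) :=
  mkLin (fun x => TT.mk c.swap (fun p q => coevAux c x p q)
    (by intros; ext; simp [TensorProduct.add_tmul, add_smul])
    (by intros; ext; simp [TensorProduct.tmul_add, add_smul])
    (by intros; ext; simp))
    (by intros; ext; simp)
    (by
      intros; ext
      simp only [TT.mk_ev, coevAux_ev, TT.tmul_smul_ev, MCtx.swap_β, ← mul_smul,
        Algebra.TensorProduct.tmul_mul_tmul, ← op_mul, ← Category.assoc, c.comp_symm]
      simp only [Category.assoc, c.symm_comp, unop_op])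

@[simp] lemma coev_ev (x : X) (p : b ⟶ a) (q : a ⟶ b) :
    (coev c X x).ev c.swap p q = coevAux c x p q := rfl

end coev

section evl
variable {Y Z : Type*} [AddCommGroup Y] [Module (B ⊗[k] Bᵐᵒᵖ) Y]
   [AddCommGroup Z] [Module (B ⊗[k] Bᵐᵒᵖ) Z]

lemma sum4 {Z : Type*} [AddCommGroup Z] {ι : Type*} [Fintype ι] (f : ι → ι → ι → ι → Z) :
    ∑ i, ∑ j, ∑ l, ∑ m, f i j l m = ∑ l, ∑ m, ∑ i, ∑ j, f i j l m := by
  calc _ = ∑ i, ∑ l, ∑ j, ∑ m, f i j l m := Finset.sum_congr rfl fun i _ => Finset.sum_comm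
    _ = ∑ l, ∑ i, ∑ j, ∑ m, f i j l m := Finset.sum_comm
    _ = ∑ l, ∑ i, ∑ m, ∑ j, f i j l m :=
      Finset.sum_congr rfl fun i _ => Finset.sum_congr rfl fun i _ => Finset.sum_comm
    _ = _ := Finset.sum_congr rfl fun i _ => Finset.sum_comm

lemma evl_smul (F : TT c (TT c.swap Y)) (s t : B) :
    ∑ i, ∑ j, (F.ev c (c.q i ≫ c.β s) (c.β t ≫ c.p j)).ev c.swap (c.p i) (c.q j) =
    (s ⊗ₜ[k] op t) • ∑ i, ∑ j, (F.ev c (c.q i) (c.p j)).ev c.swap (c.p i) (c.q j) := by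
  have h : ∀ i j, (F.ev c (c.q i ≫ c.β s) (c.β t ≫ c.p j)).ev c.swap (c.p i) (c.q j) =
      ∑ l, ∑ m, (F.ev c (c.q l) (c.p m)).ev c.swap
        (c.p i ≫ c.q i ≫ c.β s ≫ c.p l) ((c.q m ≫ c.β t) ≫ c.p j ≫ c.q j) := by
    intro i j
    rw [TT.expand c F]
    simp only [TT.sum_ev, MCtx.coef, TT.tmul_smul_ev, MCtx.swap_β, unop_op,
      LinearEquiv.apply_symm_apply, Category.assoc]
  simp only [h]
  have h1 : ∀ l, ∑ i, c.p i ≫ c.q i ≫ c.β s ≫ c.p l = c.β s ≫ c.p l := by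
    intro l
    simp only [← Category.assoc (c.p _) (c.q _)]
    rw [← Preadditive.sum_comp, c.hb, Category.id_comp]
  have h2 : ∀ m, ∑ j, (c.q m ≫ c.β t) ≫ c.p j ≫ c.q j = c.q m ≫ c.β t := by
    intro l
    rw [← Preadditive.comp_sum, c.hb, Category.comp_id]
  calc _ = ∑ l, ∑ m, ∑ i, ∑ j, (F.ev c (c.q l) (c.p m)).ev c.swap
        (c.p i ≫ c.q i ≫ c.β s ≫ c.p l) ((c.q m ≫ c.β t) ≫ c.p j ≫ c.q j) := by
        exact sum4 _
    _ = ∑ l, ∑ m, (F.ev c (c.q l) (c.p m)).ev c.swap (c.β s ≫ c.p l) (c.q m ≫ c.β t) := by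
        refine Finset.sum_congr rfl fun l _ => Finset.sum_congr rfl fun m _ => ?_
        conv_rhs => rw [← h1, ← h2]
        simp only [TT.ev_sum_left, TT.ev_sum_right]
        exact Finset.sum_comm
    _ = _ := by
        simp only [Finset.smul_sum]
        refine Finset.sum_congr rfl fun l _ => Finset.sum_congr rfl fun m _ => ?_
        exact TT.law (c := c.swap) _ _ _ _ _

variable (Y) in
noncomputable def evl : TT c (TT c.swap Y) →ₗ[B ⊗[k] Bᵐᵒᵖ] Y :=
  mkLin (fun F => ∑ i, ∑ j, (F.ev c (c.q i) (c.p j)).ev c.swap (c.p i) (c.q j))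
    (by intros; simp [Finset.sum_add_distrib])
    (by intro s t F; exact evl_smul c F s t)

lemma evl_apply (F : TT c (TT c.swap Y)) :
    evl c Y F = ∑ i, ∑ j, (F.ev c (c.q i) (c.p j)).ev c.swap (c.p i) (c.q j) := rfl

lemma evl_nat (g : Y →ₗ[B ⊗[k] Bᵐᵒᵖ] Z) (F : TT c (TT c.swap Y)) :
    g (evl c Y F) = evl c Z (TT.map c (TT.map c.swap g) F) := by
  simp [evl_apply]
end evl

lemma triangle {X : Type w} [AddCommGroup X] [Module (A ⊗[k] Aᵐᵒᵖ) X] (f : TT c X) :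
    evl c (TT c X) (TT.map c (coev c X) f) = f := by
  ext q p
  rw [TT.expand c f]
  simp [evl_apply, TT.sum_ev, MCtx.coef]

lemma TT.projective {X : Type} [AddCommGroup X] [Module (A ⊗[k] Aᵐᵒᵖ) X]
    [Module.Projective (A ⊗[k] Aᵐᵒᵖ) X] : Module.Projective (B ⊗[k] Bᵐᵒᵖ) (TT c X) := by
  refine Module.Projective.of_lifting_property ?_
  intro M N _ _ _ _ g h hg
  have hs := TT.map_surjective c.swap g hg
  obtain ⟨l, hl⟩ := Module.projective_lifting_property (TT.map c.swap g)
    (TT.map c.swap h ∘ₗ coev c X) hs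
  refine ⟨evl c _ ∘ₗ TT.map c l, ?_⟩
  apply LinearMap.ext
  intro f
  simp only [LinearMap.comp_apply]
  rw [evl_nat]
  conv_rhs => rw [← triangle c f, evl_nat]
  congr 1
  ext1 q p
  exact LinearMap.congr_fun hl _

end

section regular

lemma reg_smul (x y z : A) :
   ((x ⊗ₜ[k] op y) • (show regularBimodule k A from z) : regularBimodule k A) = 
     (show regularBimodule k A from (x * (z * y) : A)) := rfl

lemma reg_aux1 (s : B) (x y : A) (q : a ⟶ b) (p : b ⟶ a) :
    c.α.symm ((c.α x ≫ q) ≫ c.β s ≫ p ≫ c.α y) = x * (c.α.symm (q ≫ c.β s ≫ p) * y) := by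
  simp only [Category.assoc, c.symm_comp]
  simp only [← Category.assoc, c.comp_symm]

lemma reg_aux2 (s t : B) (q : a ⟶ b) (p : b ⟶ a) :
    c.α.symm (q ≫ c.β (s + t) ≫ p) = c.α.symm (q ≫ c.β s ≫ p) + c.α.symm (q ≫ c.β t ≫ p) := by
  simp

lemma reg_aux3 (x y s : B) (q : a ⟶ b) (p : b ⟶ a) :
    c.α.symm (q ≫ c.β (x * (s * y)) ≫ p) = c.α.symm ((q ≫ c.β x) ≫ c.β s ≫ (c.β y ≫ p)) := by
  simp [c.β_mul]

noncomputable def regAux (s : B) : TT c (regularBimodule k A) :=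
  TT.mk c (fun q p => (show regularBimodule k A from c.α.symm (q ≫ c.β s ≫ p)))
    (by intros; simp; rfl)
    (by intros; simp; rfl)
    (by
      intro x y q p
      exact reg_aux1 c s x y q p)

lemma regAux_ev (s : B) (q : a ⟶ b) (p : b ⟶ a) :
  (regAux c s).ev c q p = (show regularBimodule k A from c.α.symm (q ≫ c.β s ≫ p)) := rfl

noncomputable def regMap : regularBimodule k B →ₗ[B ⊗[k] Bᵐᵒᵖ] TT c (regularBimodule k A) :=
  mkLin (fun s => regAux c (show B from s))
    (by
      intro s t; ext q p
      exact reg_aux2 c s t q p)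
    (by
      intro x y s; ext q p
      exact reg_aux3 c x y s q p)

lemma regMap_bij : Function.Bijective (regMap c) := by
  have hexp : ∀ s : B, c.β s = ∑ i, ∑ j, c.p i ≫ (c.q i ≫ c.β s ≫ c.p j) ≫ c.q j := by
    intro s
    have : c.β s = (∑ i, c.p i ≫ c.q i) ≫ c.β s ≫ (∑ j, c.p j ≫ c.q j) := by simp [c.hb]
    conv_lhs => rw [this]
    simp [Preadditive.sum_comp, Preadditive.comp_sum]
    first | done | exact Finset.sum_comm
  constructor
  · intro s t h
    have h' : ∀ q p, c.α.symm (q ≫ c.β (show B from s) ≫ p) = c.α.symm (q ≫ c.β (show B from t) ≫ p) :=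
      fun q p => congrArg (fun f => f.ev c q p) h
    have h' : ∀ q p, (q ≫ c.β (show B from s) ≫ p) = (q ≫ c.β (show B from t) ≫ p) :=
      fun q p => c.α.symm.injective (h' q p)
    have : c.β (show B from s) = c.β (show B from t) := by
      rw [hexp, hexp (show B from t)]; simp only [h']
    exact c.β.injective this
  · intro f
    let φ : (a ⟶ b) → (b ⟶ a) → A := fun q p => f.ev c q p
    refine ⟨(show B from c.β.symm (∑ i, ∑ j, c.p i ≫ c.α (φ (c.q i) (c.p j)) ≫ c.q j)), ?_⟩
    ext q p
    rw [TT.expand c f]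
    change c.α.symm (q ≫ c.β (c.β.symm (∑ i, ∑ j, c.p i ≫ c.α (φ (c.q i) (c.p j)) ≫ c.q j)) ≫ p) = 
      ∑ i, ∑ j, (c.α.symm (q ≫ c.p i) * (φ (c.q i) (c.p j) * c.α.symm (c.q j ≫ p)))
    apply c.α.injective
    simp [Preadditive.sum_comp, Preadditive.comp_sum, c.α_mul]

noncomputable def regEquiv :
    regularBimodule k B ≃ₗ[B ⊗[k] Bᵐᵒᵖ] TT c (regularBimodule k A) :=
  LinearEquiv.ofBijective (regMap c) (regMap_bij c)

end regular

noncomputable def TT.mapEquiv {X Y : Type*} [AddCommGroup X] [Module (A ⊗[k] Aᵐᵒᵖ) X]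
    [AddCommGroup Y] [Module (A ⊗[k] Aᵐᵒᵖ) Y] (e : X ≃ₗ[A ⊗[k] Aᵐᵒᵖ] Y) :
    TT c X ≃ₗ[B ⊗[k] Bᵐᵒᵖ] TT c Y :=
  LinearEquiv.ofBijective (TT.map c e.toLinearMap)
    ⟨TT.map_injective c _ e.injective, TT.map_surjective c _ e.surjective⟩

theorem periodic_of_ctx (c : MCtx k A B a b) (h : IsPeriodicAlgebra k A) : IsPeriodicAlgebra k B := by
  obtain ⟨n, hn, P, d, e0, e1, hP, hs, hi, hex⟩ := h
  have : ∀ i, Small.{0} (TT c (P i)) := fun i => TT.small c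
  let E : ∀ i, Shrink.{0} (TT c (P i)) ≃ₗ[B ⊗[k] Bᵐᵒᵖ] TT c (P i) :=
    fun i => Shrink.linearEquiv _ _
  refine ⟨n, hn, fun i => ModuleCat.of _ (Shrink.{0} (TT c (P i))),
    fun i => (E i).symm.toLinearMap ∘ₗ TT.map c (d i) ∘ₗ (E (i+1)).toLinearMap,
    (E 0) ≪≫ₗ TT.mapEquiv c e0 ≪≫ₗ (regEquiv c).symm,
    regEquiv c ≪≫ₗ TT.mapEquiv c e1 ≪≫ₗ (E (n+1)).symm, ?_, ?_, ?_, ?_⟩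
  · intro i h1 h2
    have := hP i h1 h2
    have := TT.projective c (X := P i)
    exact Module.Projective.of_equiv (E i).symm
  · have := TT.map_surjective c _ hs
    simpa using this
  · have := TT.map_injective c _ hi
    simpa using this
  · intro i hin
    have := TT.map_exact c _ _ (hex i hin)
    ext x
    have hx := SetLike.ext_iff.1 this (E _ x)
    simp only [LinearMap.mem_range, LinearMap.mem_ker, LinearMap.comp_apply,
      LinearEquiv.coe_coe] at hx ⊢
    rw [LinearEquiv.map_eq_zero_iff, ← hx]
    constructor
    · rintro ⟨y, rfl⟩
      exact ⟨E _ y, by simp⟩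
    · rintro ⟨y, hy⟩
      exact ⟨(E _).symm y, by simp [hy]⟩

section morita

abbrev RR (A : Type) [Ring A] : ModuleCat.{u} A := ModuleCat.of A (ULift.{u} A)

lemma isSeparator_RR (A : Type) [Ring A] : IsSeparator (RR.{u} A) := by
  rw [Preadditive.isSeparator_iff]
  intro X Y f h
  ext x
  have := h (ModuleCat.ofHom ((LinearMap.toSpanSingleton A X x).comp
    (ULift.moduleEquiv : ULift.{u} A ≃ₗ[A] A).toLinearMap))
  have := congrArg (fun g => g.hom (ULift.up 1)) this
  simpa using this

lemma RR_hom_ext {A : Type} [Ring A] {X : ModuleCat.{u} A} {f g : RR.{u} A ⟶ X}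
    (h : f.hom (ULift.up 1) = g.hom (ULift.up 1)) : f = g := by
  apply ModuleCat.hom_ext
  apply LinearMap.ext
  intro x
  have hx : x = x.down • (ULift.up 1 : ULift.{u} A) := by
    apply ULift.ext
    simp
  have h1 := f.hom.map_smul x.down (ULift.up 1)
  have h2 := g.hom.map_smul x.down (ULift.up 1)
  rw [hx]
  exact h1.trans ((congrArg (fun z => x.down • z) h).trans h2.symm)

def mkEndLin {k A : Type} [Field k] [Ring A] [Algebra k A]
    {C : Type v} [Category.{u} C] [Preadditive C] [Linear k C] {a : C} (f : A → (a ⟶ a))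
    (g : (a ⟶ a) → A) (h1 : ∀ x, g (f x) = x) (h2 : ∀ x, f (g x) = x)
    (hadd : ∀ x y, f (x + y) = f x + f y) (hsmul : ∀ (r : k) x, f (r • x) = r • f x) :
    A ≃ₗ[k] (a ⟶ a) where
  toFun := f
  invFun := g
  left_inv := h1
  right_inv := h2
  map_add' := hadd
  map_smul' := hsmul

def rmul0 {A : Type} [Ring A] (x : A) : RR.{u} A ⟶ RR.{u} A :=
  ModuleCat.ofHom
    { toFun := fun y => ULift.up (y.down * x)
      map_add' := by intros; ext; simp [add_mul]
      map_smul' := by intros; ext; simp [mul_assoc] }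

noncomputable def rmul (k A : Type) [Field k] [Ring A] [Algebra k A] :=
  mkEndLin (k := k) (a := RR.{u} A) (rmul0 (A := A)) (fun f => (f.hom (ULift.up 1)).down)
  (by intro x; simp [rmul0])
  (by
    intro f
    apply RR_hom_ext
    apply ULift.ext
    simp [rmul0])
  (by
    intro x y
    apply RR_hom_ext
    apply ULift.ext
    change 1 * (x + y) = 1 * x + 1 * y
    simp)
  (by
    intro r x
    apply RR_hom_ext
    apply ULift.ext
    change 1 * (r • x) = (algebraMap k A r • (ULift.up (1 * x) : ULift.{u} A)).down
    simp [Algebra.smul_def])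

lemma rmul_apply (k A : Type) [Field k] [Ring A] [Algebra k A] (x : A) :
    rmul.{u} k A x = rmul0 x := rfl

lemma rmul_mul (k A : Type) [Field k] [Ring A] [Algebra k A] (x y : A) :
    rmul.{u} k A (x * y) = rmul k A x ≫ rmul k A y := by
  apply RR_hom_ext
  apply ULift.ext
  simp [rmul_apply, rmul0]

lemma rmul_one (k A : Type) [Field k] [Ring A] [Algebra k A] :
    rmul.{u} k A 1 = 𝟙 _ := by
  apply RR_hom_ext
  apply ULift.ext
  simp [rmul_apply, rmul0]

lemma trace_sep {B : Type} [Ring B] (g : ModuleCat.{u} B) (hg : IsSeparator g) :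
    ∃ (n : ℕ) (p : Fin n → (RR.{u} B ⟶ g)) (q : Fin n → (g ⟶ RR.{u} B)),
      ∑ i, p i ≫ q i = 𝟙 (RR.{u} B) := by
  classical
  let I : Submodule B (RR.{u} B) := ⨆ f : g ⟶ RR.{u} B, LinearMap.range f.hom
  have hI : ∀ x, x ∈ I := by
    rw [Preadditive.isSeparator_iff] at hg
    have h0 := hg (ModuleCat.ofHom I.mkQ) (by
      intro f
      ext x
      simp only [ModuleCat.hom_comp, ModuleCat.hom_ofHom, LinearMap.comp_apply,
        ModuleCat.hom_zero, LinearMap.zero_apply]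
      rw [Submodule.mkQ_apply, Submodule.Quotient.mk_eq_zero]
      exact Submodule.mem_iSup_of_mem f ⟨x, rfl⟩)
    intro x
    have := congrArg (fun g => g.hom x) h0
    simpa using this
  obtain ⟨s, hs, hsum⟩ := (Submodule.mem_iSup_iff_exists_finsupp _ _).1 (hI (ULift.up 1))
  choose y hy using hs
  let e := s.support.equivFin
  refine ⟨s.support.card, fun i => ModuleCat.ofHom ((LinearMap.toSpanSingleton B g
    (y (e.symm i).1)).comp (ULift.moduleEquiv : ULift.{u} B ≃ₗ[B] B).toLinearMap),
    fun i => (e.symm i).1, ?_⟩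
  rw [e.symm.sum_comp (fun i : s.support => (ModuleCat.ofHom ((LinearMap.toSpanSingleton B g
    (y i.1)).comp (ULift.moduleEquiv : ULift.{u} B ≃ₗ[B] B).toLinearMap) ≫ i.1 :
      RR.{u} B ⟶ RR.{u} B))]
  apply RR_hom_ext
  simp only [ModuleCat.hom_sum, LinearMap.sum_apply]
  rw [Finsupp.sum, ← Finset.sum_coe_sort] at hsum
  simp only [ModuleCat.hom_comp, ModuleCat.hom_ofHom, LinearMap.comp_apply,
    LinearEquiv.coe_coe, ULift.moduleEquiv_apply, LinearMap.toSpanSingleton_apply, one_smul,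
    ModuleCat.hom_id, LinearMap.id_apply]
  simp only [hy, hsum]

theorem exists_ctx {k A B : Type} [Field k] [Ring A] [Algebra k A] [Ring B] [Algebra k B]
    (F : ModuleCat.{u} A ⥤ ModuleCat.{v} B) [F.Additive] [F.IsEquivalence] [F.Linear k] :
    Nonempty (MCtx k A B (F.obj (RR.{u} A)) (RR.{v} B)) := by
  obtain ⟨n, p, q, hb⟩ := trace_sep (F.obj (RR.{u} A))
    ((isSeparator_RR.{u} A).of_equivalence F.asEquivalence)
  obtain ⟨m, p', q', ha⟩ := trace_sep (F.inv.obj (RR.{v} B))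
    ((isSeparator_RR.{v} B).of_equivalence F.asEquivalence.symm)
  let ε : F.obj (F.inv.obj (RR.{v} B)) ≅ RR.{v} B := F.asEquivalence.counitIso.app _
  refine ⟨{
    α := (rmul k A).trans (LinearEquiv.ofBijective (F.mapLinearMap k)
      ⟨F.map_injective, F.map_surjective⟩)
    α_mul := ?_
    α_one := ?_
    β := rmul k B
    β_mul := rmul_mul k B
    β_one := rmul_one k B
    n := n
    p := p
    q := q
    hb := hb
    m := m
    q' := fun i => F.map (p' i) ≫ ε.hom
    p' := fun i => ε.inv ≫ F.map (q' i)
    ha := ?_ }⟩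
  · intro x y
    change F.map (rmul k A (x * y)) = F.map (rmul k A x) ≫ F.map (rmul k A y)
    rw [rmul_mul, F.map_comp]
  · change F.map (rmul k A 1) = _
    rw [rmul_one, F.map_id]
  · simp only [Category.assoc, Iso.hom_inv_id_assoc, ← F.map_comp]
    rw [← F.map_sum, ha, F.map_id]

end morita

end MoritaPeriodic

/-- If finite-dimensional `k`-algebras `A` and `B` are Morita equivalent,
i.e. there is a `k`-linear equivalence between their module categories, then `A` is periodic
if and only if `B` is periodic. -/
theorem isPeriodicAlgebra_of_moritaEquivalent (k A B : Type) [Field k]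
    [Ring A] [Algebra k A] [Ring B] [Algebra k B]
    [FiniteDimensional k A] [FiniteDimensional k B]
    (h : ∃ (F : ModuleCat A ⥤ ModuleCat B) (hadd : F.Additive),
      F.IsEquivalence ∧ (letI := hadd; Functor.Linear k F)) :
    IsPeriodicAlgebra k A ↔ IsPeriodicAlgebra k B := by
  obtain ⟨F, hadd, heq, hlin⟩ := h
  obtain ⟨c⟩ := MoritaPeriodic.exists_ctx (k := k) F
  exact ⟨MoritaPeriodic.periodic_of_ctx c, MoritaPeriodic.periodic_of_ctx c.swap⟩
end

section
/- Let k be a perfect field of characteristic different from 2, and let A be a finite-dimensional k-algebra that is ring-indecomposable (its only central idempotents are 0 and 1), not semisimple, and periodic. Then the minimal period of A, i.e., the least integer n ≥ 1 for which there exists an exact sequence 0 → A → P_{n-1} → ⋯ → P_0 → A → 0 of A-A-bimodules with each P_i a projective A ⊗_k A^op-module, is even. -/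
open TensorProduct

open CategoryTheory Abelian

section ses
variable {R : Type} [Ring R]

structure IsSES {M N L : Type} [AddCommGroup M] [AddCommGroup N] [AddCommGroup L]
    [Module R M] [Module R N] [Module R L] (f : M →ₗ[R] N) (g : N →ₗ[R] L) : Prop where
  inj : Function.Injective f
  surj : Function.Surjective g
  exact : Function.Exact f g

section
variable {M N L : Type} [AddCommGroup M] [AddCommGroup N] [AddCommGroup L]
    [Module R M] [Module R N] [Module R L] {f : M →ₗ[R] N} {g : N →ₗ[R] L}
variable {M' N' L' : Type} [AddCommGroup M'] [AddCommGroup N'] [AddCommGroup L']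
    [Module R M'] [Module R N'] [Module R L'] {f' : M' →ₗ[R] N'} {g' : N' →ₗ[R] L'}

/-- the short complex -/
def IsSES.sc (h : IsSES f g) : ShortComplex (ModuleCat.{0} R) :=
  ShortComplex.mk (ModuleCat.ofHom f) (ModuleCat.ofHom g) (by
    ext x
    exact h.exact.apply_apply_eq_zero x)

lemma IsSES.shortExact (h : IsSES f g) : h.sc.ShortExact where
  exact := (ShortComplex.ShortExact.moduleCat_exact_iff_function_exact _).2 h.exact
  mono_f := (ModuleCat.mono_iff_injective _).2 h.inj
  epi_g := (ModuleCat.epi_iff_surjective _).2 h.surj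

noncomputable def IsSES.cls (h : IsSES f g) : Ext (ModuleCat.of R L) (ModuleCat.of R M) 1 :=
  h.shortExact.extClass

noncomputable def xm {M N : Type} [AddCommGroup M] [AddCommGroup N] [Module R M] [Module R N]
    (f : M →ₗ[R] N) : Ext (ModuleCat.of R M) (ModuleCat.of R N) 0 := Ext.mk₀ (ModuleCat.ofHom f)

lemma xm_comp (f : M →ₗ[R] N) (g : N →ₗ[R] L) :
    (xm f).comp (xm g) (zero_add 0) = xm (g ∘ₗ f) := by
  simp [xm, Ext.mk₀_comp_mk₀, ModuleCat.ofHom_comp]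

lemma IsSES.naturality (h : IsSES f g) (h' : IsSES f' g') (a : M →ₗ[R] M') (b : N →ₗ[R] N')
    (c : L →ₗ[R] L') (hab : ∀ x, f' (a x) = b (f x)) (hbc : ∀ x, g' (b x) = c (g x)) :
    h.cls.comp (xm a) (add_zero 1) = (xm c).comp h'.cls (zero_add 1) :=
  ShortComplex.ShortExact.extClass_naturality h.shortExact h'.shortExact
    (ShortComplex.Hom.mk (ModuleCat.ofHom a) (ModuleCat.ofHom b) (ModuleCat.ofHom c)
      (by ext x; exact hab x) (by ext x; exact hbc x))

lemma IsSES.cancel (h : IsSES f g) [Module.Projective R N] {Y : ModuleCat.{0} R} {m m' : ℕ}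
    (hm : 1 ≤ m) (hm' : 1 + m = m') (z : Ext (ModuleCat.of R M) Y m)
    (hz : h.cls.comp z hm' = 0) : z = 0 := by
  obtain ⟨y, hy⟩ := Ext.contravariant_sequence_exact₁ h.shortExact Y z hm' hz
  obtain ⟨j, rfl⟩ : ∃ j, m = j + 1 := ⟨m - 1, by omega⟩
  have : Projective (ModuleCat.of R N) :=
    (IsProjective.iff_projective (R := R) N).1 inferInstance
  have : y = 0 := Ext.eq_zero_of_projective (P := ModuleCat.of R N) y
  rw [← hy, this]
  exact Ext.comp_zero _ _ _ _ _

lemma IsSES.extend (h : IsSES f g) (φ : M →ₗ[R] M') (hz : h.cls.comp (xm φ) (add_zero 1) = 0) :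
    ∃ ψ : N →ₗ[R] M', ψ ∘ₗ f = φ := by
  obtain ⟨y, hy⟩ := Ext.contravariant_sequence_exact₁ h.shortExact _ (xm φ) (add_zero 1) hz
  obtain ⟨ψ, rfl⟩ := (Ext.mk₀_bijective _ _).2 y
  have h2 : h.sc.f ≫ ψ = ModuleCat.ofHom φ := (Ext.mk₀_bijective _ _).1 (by
    rw [← Ext.mk₀_comp_mk₀]; exact hy)
  refine ⟨ψ.hom, ?_⟩
  have := congrArg ModuleCat.Hom.hom h2
  exact this

lemma exists_lift_inj {X : Type} [AddCommGroup X] [Module R X] (hf : Function.Injective f)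
    (hh : Function.Exact f g) (φ : X →ₗ[R] N) (h0 : ∀ x, g (φ x) = 0) :
    ∃ ψ : X →ₗ[R] M, ∀ x, f (ψ x) = φ x := by
  have hm : ∀ x, φ x ∈ LinearMap.range f := fun x => (hh _).1 (h0 x)
  refine ⟨(LinearEquiv.ofInjective f hf).symm.toLinearMap ∘ₗ φ.codRestrict _ hm, fun x => ?_⟩
  have := (LinearEquiv.ofInjective f hf).apply_symm_apply (φ.codRestrict _ hm x)
  exact congrArg Subtype.val this
end

lemma anti
    {X00 X01 X02 X10 X11 X12 X20 X21 X22 : Type}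
    [AddCommGroup X00] [AddCommGroup X01] [AddCommGroup X02]
    [AddCommGroup X10] [AddCommGroup X11] [AddCommGroup X12]
    [AddCommGroup X20] [AddCommGroup X21] [AddCommGroup X22]
    [Module R X00] [Module R X01] [Module R X02]
    [Module R X10] [Module R X11] [Module R X12]
    [Module R X20] [Module R X21] [Module R X22]
    {f0 : X00 →ₗ[R] X10} {g0 : X10 →ₗ[R] X20}
    {f1 : X01 →ₗ[R] X11} {g1 : X11 →ₗ[R] X21}
    {f2 : X02 →ₗ[R] X12} {g2 : X12 →ₗ[R] X22}
    {u0 : X00 →ₗ[R] X01} {v0 : X01 →ₗ[R] X02}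
    {u1 : X10 →ₗ[R] X11} {v1 : X11 →ₗ[R] X12}
    {u2 : X20 →ₗ[R] X21} {v2 : X21 →ₗ[R] X22}
    (r0 : IsSES f0 g0) (r1 : IsSES f1 g1) (r2 : IsSES f2 g2)
    (c0 : IsSES u0 v0) (c1 : IsSES u1 v1) (c2 : IsSES u2 v2)
    (h1 : ∀ x, u1 (f0 x) = f1 (u0 x)) (h2 : ∀ x, u2 (g0 x) = g1 (u1 x))
    (h3 : ∀ x, v1 (f1 x) = f2 (v0 x)) (h4 : ∀ x, v2 (g1 x) = g2 (v1 x)) :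
    r2.cls.comp c0.cls (show 1 + 1 = 2 by rfl) = - c2.cls.comp r0.cls (show 1 + 1 = 2 by rfl) := by
  let w : X11 →ₗ[R] X22 := g2 ∘ₗ v1
  let K := LinearMap.ker w
  have hK : IsSES K.subtype w := ⟨Subtype.val_injective, r2.surj.comp c1.surj, fun x => by
    simp [K]⟩
  obtain ⟨p, hp⟩ := exists_lift_inj r2.inj r2.exact (v1 ∘ₗ K.subtype) (fun x => x.2)
  obtain ⟨q, hq⟩ := exists_lift_inj c2.inj c2.exact (g1 ∘ₗ K.subtype) (fun x => by
    have := x.2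
    simp only [LinearMap.comp_apply, Submodule.subtype_apply]
    rw [h4]; exact x.2)
  have e1 : hK.cls.comp (xm p) (add_zero 1) = r2.cls := by
    rw [hK.naturality r2 p v1 LinearMap.id hp (fun _ => rfl)]
    exact Ext.mk₀_id_comp _
  have e2 : hK.cls.comp (xm q) (add_zero 1) = c2.cls := by
    rw [hK.naturality c2 q g1 LinearMap.id hq h4]
    exact Ext.mk₀_id_comp _
  -- the sequence X00 -> X01 × X10 -> K
  have hm : ∀ y : X01 × X10, (LinearMap.coprod f1 u1) y ∈ K := by
    intro y
    simp only [K, LinearMap.mem_ker, w, LinearMap.comp_apply, LinearMap.coprod_apply, map_add, h3,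
      c1.exact.apply_apply_eq_zero, r2.exact.apply_apply_eq_zero, map_zero, add_zero]
  let s : X01 × X10 →ₗ[R] K := (LinearMap.coprod f1 u1).codRestrict K hm
  have hG : IsSES (LinearMap.prod u0 (-f0)) s := by
    refine ⟨fun x y hxy => c0.inj (congrArg Prod.fst hxy), ?_, ?_⟩
    · rintro ⟨x, hx⟩
      obtain ⟨y, hy⟩ := (r2.exact _).1 hx
      obtain ⟨y', rfl⟩ := c0.surj y
      obtain ⟨z, hz⟩ := (c1.exact (x - f1 y')).1 (by rw [map_sub, h3, hy, sub_self])
      exact ⟨(y', z), Subtype.ext (by simp [s, hz])⟩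
    · rintro ⟨y, z⟩
      constructor
      · intro h
        have h' : f1 y + u1 z = 0 := congrArg Subtype.val h
        have : v0 y = 0 := r2.inj (by
          rw [← h3, map_zero, eq_neg_of_add_eq_zero_left h', map_neg,
            c1.exact.apply_apply_eq_zero, neg_zero])
        obtain ⟨t, rfl⟩ := (c0.exact _).1 this
        refine ⟨t, Prod.ext rfl (c1.inj ?_)⟩
        change u1 (- f0 t) = u1 z
        rw [map_neg, h1]
        exact (eq_neg_of_add_eq_zero_right h').symm
      · rintro ⟨t, ht⟩
        apply Subtype.ext
        simp only [s, LinearMap.codRestrict_apply]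
        rw [← ht]
        simp [h1]
  have e3 : hG.cls = (xm p).comp c0.cls (zero_add 1) := by
    rw [← hG.naturality c0 LinearMap.id (LinearMap.fst R _ _) p (fun _ => rfl)]
    · exact (Ext.comp_mk₀_id _).symm
    · intro x
      apply r2.inj
      rw [hp, ← h3]
      simp [s, c1.exact.apply_apply_eq_zero]
  have e4 : - hG.cls = (xm q).comp r0.cls (zero_add 1) := by
    rw [← hG.naturality r0 (-LinearMap.id) (LinearMap.snd R _ _) q (fun _ => by simp)]
    · have : xm (-LinearMap.id : X00 →ₗ[R] X00) = - Ext.mk₀ (𝟙 (ModuleCat.of R X00)) := by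
        rw [← Ext.mk₀_neg]; rfl
      rw [this, Ext.comp_neg]
      exact congrArg _ (Ext.comp_mk₀_id _).symm
    · intro x
      apply c2.inj
      rw [hq, h2]
      simp [s, r1.exact.apply_apply_eq_zero]
  rw [← e1, ← e2, Ext.comp_assoc_of_second_deg_zero, Ext.comp_assoc_of_second_deg_zero, ← e3, ← e4,
    Ext.comp_neg, neg_neg]

end ses

section tensor

abbrev Env (k A : Type) [Field k] [Ring A] [Algebra k A] : Type := A ⊗[k] Aᵐᵒᵖ

variable (k A : Type) [Field k] [Ring A] [Algebra k A]

abbrev lo : A →ₐ[k] Env k A := Algebra.TensorProduct.includeLeft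
abbrev ro : Aᵐᵒᵖ →ₐ[k] Env k A := Algebra.TensorProduct.includeRight

lemma lo_mul_ro (a : A) (b : Aᵐᵒᵖ) : lo k A a * ro k A b = a ⊗ₜ b := by simp
lemma ro_mul_lo (a : A) (b : Aᵐᵒᵖ) : ro k A b * lo k A a = a ⊗ₜ b := by simp

variable (M N L M' N' M'' : Type) [AddCommGroup M] [AddCommGroup N] [AddCommGroup L]
  [AddCommGroup M'] [AddCommGroup N'] [AddCommGroup M'']
  [Module k M] [Module k N] [Module k L] [Module k M'] [Module k N'] [Module k M'']
  [Module (Env k A) M] [Module (Env k A) N] [Module (Env k A) L] [Module (Env k A) M']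
  [Module (Env k A) N'] [Module (Env k A) M'']
  [IsScalarTower k (Env k A) M] [IsScalarTower k (Env k A) N] [IsScalarTower k (Env k A) L]
  [IsScalarTower k (Env k A) M'] [IsScalarTower k (Env k A) N'] [IsScalarTower k (Env k A) M'']

/-- relations -/
def relT : Submodule k (M ⊗[k] N) :=
  Submodule.span k {t | ∃ (a : A) (m : M) (n : N),
    t = (ro k A (MulOpposite.op a) • m) ⊗ₜ[k] n - m ⊗ₜ[k] (lo k A a • n)}

/-- tensor product over `A` -/
def TT : Type := (M ⊗[k] N) ⧸ relT k A M N

noncomputable instance : AddCommGroup (TT k A M N) :=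
  inferInstanceAs (AddCommGroup ((M ⊗[k] N) ⧸ relT k A M N))
noncomputable instance : Module k (TT k A M N) :=
  inferInstanceAs (Module k ((M ⊗[k] N) ⧸ relT k A M N))

noncomputable def mkT : M ⊗[k] N →ₗ[k] TT k A M N := (relT k A M N).mkQ

variable {M N L M' N' M''}

noncomputable def tt (m : M) (n : N) : TT k A M N := mkT k A M N (m ⊗ₜ n)

lemma tt_add (m : M) (n n' : N) : tt k A m (n + n') = tt k A m n + tt k A m n' := by
  simp [tt, TensorProduct.tmul_add]
lemma add_tt (m m' : M) (n : N) : tt k A (m + m') n = tt k A m n + tt k A m' n := by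
  simp [tt, TensorProduct.add_tmul]
lemma smul_tt (c : k) (m : M) (n : N) : tt k A (c • m) n = c • tt k A m n := by
  rw [tt, tt, ← TensorProduct.smul_tmul', map_smul]
lemma tt_smul (c : k) (m : M) (n : N) : tt k A m (c • n) = c • tt k A m n := by
  simp [tt]

lemma tt_bal (a : A) (m : M) (n : N) :
    tt k A (ro k A (MulOpposite.op a) • m) n = tt k A m (lo k A a • n) := by
  unfold tt mkT
  exact (Submodule.Quotient.eq _).2 (Submodule.subset_span ⟨a, m, n, rfl⟩)

@[elab_as_elim]
lemma TT_ind {p : TT k A M N → Prop} (x : TT k A M N) (h0 : p 0)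
    (h : ∀ m n, p (tt k A m n)) (ha : ∀ x y, p x → p y → p (x + y)) : p x := by
  obtain ⟨x, rfl⟩ := Submodule.mkQ_surjective _ x
  induction x using TensorProduct.induction_on with
  | zero => rw [map_zero]; exact h0
  | tmul m n => exact h m n
  | add x y hx hy => rw [map_add]; exact ha _ _ hx hy

/-- lifting out of the tensor product -/
noncomputable def liftT {X : Type} [AddCommGroup X] [Module k X] (f : M →ₗ[k] N →ₗ[k] X)
    (h : ∀ a m n, f (ro k A (MulOpposite.op a) • m) n = f m (lo k A a • n)) :
    TT k A M N →ₗ[k] X :=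
  (relT k A M N).liftQ (TensorProduct.lift f) (by
    rw [relT, Submodule.span_le]
    rintro _ ⟨a, m, n, rfl⟩
    simp only [SetLike.mem_coe, LinearMap.mem_ker, map_sub, TensorProduct.lift.tmul, h, sub_self])

lemma liftT_tt {X : Type} [AddCommGroup X] [Module k X] (f : M →ₗ[k] N →ₗ[k] X)
    (h : ∀ a m n, f (ro k A (MulOpposite.op a) • m) n = f m (lo k A a • n)) (m : M) (n : N) :
    liftT k A f h (tt k A m n) = f m n := by
  simp only [liftT, tt, mkT]
  exact (Submodule.liftQ_apply _ _ _).trans (by simp)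

def LLin (f : M →ₗ[k] M') : Prop := ∀ (a : A) (m : M), f (lo k A a • m) = lo k A a • f m
def RLin (f : M →ₗ[k] M') : Prop := ∀ (a : Aᵐᵒᵖ) (m : M), f (ro k A a • m) = ro k A a • f m

noncomputable def mapT (f : M →ₗ[k] M') (g : N →ₗ[k] N') (hf : RLin k A f) (hg : LLin k A g) :
    TT k A M N →ₗ[k] TT k A M' N' :=
  liftT k A (((TensorProduct.mk k M' N').compl₁₂ f g).compr₂ (mkT k A M' N')) (fun a m n => by
    simp only [LinearMap.compr₂_apply, LinearMap.compl₁₂_apply, TensorProduct.mk_apply, hf _ _,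
      hg _ _]
    exact tt_bal k A _ _ _)

lemma mapT_tt (f : M →ₗ[k] M') (g : N →ₗ[k] N') (hf : RLin k A f) (hg : LLin k A g) (m : M)
    (n : N) : mapT k A f g hf hg (tt k A m n) = tt k A (f m) (g n) := by
  rw [mapT, liftT_tt]; rfl

lemma TT_ext {X : Type} [AddCommGroup X] {f g : TT k A M N →+ X}
    (h : ∀ m n, f (tt k A m n) = g (tt k A m n)) (x : TT k A M N) : f x = g x := by
  refine TT_ind k A (p := fun x => f x = g x) x ?_ h ?_
  · rw [map_zero, map_zero]
  · intro x y hx hy; rw [map_add, map_add, hx, hy]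

lemma TT_extk {X : Type} [AddCommGroup X] [Module k X] {f g : TT k A M N →ₗ[k] X}
    (h : ∀ m n, f (tt k A m n) = g (tt k A m n)) : f = g :=
  LinearMap.ext (TT_ext k A (f := f.toAddMonoidHom) (g := g.toAddMonoidHom) h)

/-- multiplication operator -/
noncomputable def ml (r : Env k A) : M →ₗ[k] M := Algebra.lsmul k k M r

lemma ml_apply (r : Env k A) (m : M) : ml k A r m = r • m := rfl

lemma ml_lo (a : A) : RLin k A (ml k A (M := M) (lo k A a)) := by
  intro b m
  rw [ml_apply, ml_apply, smul_smul, smul_smul, lo_mul_ro, ro_mul_lo]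
lemma ml_ro (b : Aᵐᵒᵖ) : LLin k A (ml k A (M := M) (ro k A b)) := by
  intro b m
  rw [ml_apply, ml_apply, smul_smul, smul_smul, lo_mul_ro, ro_mul_lo]

lemma idL : LLin k A (LinearMap.id : M →ₗ[k] M) := fun _ _ => rfl
lemma idR : RLin k A (LinearMap.id : M →ₗ[k] M) := fun _ _ => rfl

variable (M N) in
noncomputable def actL : A →ₐ[k] Module.End k (TT k A M N) :=
  AlgHom.ofLinearMap
    { toFun := fun a => mapT k A (ml k A (lo k A a)) LinearMap.id (ml_lo k A a) (idL k A)
      map_add' := fun a b => TT_extk k A (fun m n => by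
        simp only [LinearMap.add_apply, mapT_tt, ml_apply, map_add, add_smul, add_tt])
      map_smul' := fun c a => TT_extk k A (fun m n => by
        simp only [LinearMap.smul_apply, mapT_tt, ml_apply, map_smul, smul_assoc, smul_tt,
          RingHom.id_apply]) }
    (TT_extk k A (fun m n => by
      simp only [LinearMap.coe_mk, AddHom.coe_mk, mapT_tt, ml_apply, map_one, one_smul]; rfl))
    (fun a b => TT_extk k A (fun m n => by
      simp only [LinearMap.coe_mk, AddHom.coe_mk, Module.End.mul_apply, mapT_tt, ml_apply,
        map_mul, mul_smul]; rfl))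

variable (M N) in
noncomputable def actR : Aᵐᵒᵖ →ₐ[k] Module.End k (TT k A M N) :=
  AlgHom.ofLinearMap
    { toFun := fun a => mapT k A LinearMap.id (ml k A (ro k A a)) (idR k A) (ml_ro k A a)
      map_add' := fun a b => TT_extk k A (fun m n => by
        simp only [LinearMap.add_apply, mapT_tt, ml_apply, map_add, add_smul, tt_add])
      map_smul' := fun c a => TT_extk k A (fun m n => by
        simp only [LinearMap.smul_apply, mapT_tt, ml_apply, map_smul, smul_assoc, tt_smul,
          RingHom.id_apply]) }
    (TT_extk k A (fun m n => by
      simp only [LinearMap.coe_mk, AddHom.coe_mk, mapT_tt, ml_apply, map_one, one_smul]; rfl))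
    (fun a b => TT_extk k A (fun m n => by
      simp only [LinearMap.coe_mk, AddHom.coe_mk, Module.End.mul_apply, mapT_tt, ml_apply,
        map_mul, mul_smul]; rfl))

lemma actL_tt (a : A) (m : M) (n : N) : actL k A M N a (tt k A m n) = tt k A (lo k A a • m) n :=
  mapT_tt k A _ _ (ml_lo k A a) (idL k A) m n
lemma actR_tt (a : Aᵐᵒᵖ) (m : M) (n : N) :
    actR k A M N a (tt k A m n) = tt k A m (ro k A a • n) :=
  mapT_tt k A _ _ (idR k A) (ml_ro k A a) m n

lemma act_comm (a : A) (b : Aᵐᵒᵖ) : Commute (actL k A M N a) (actR k A M N b) :=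
  TT_extk k A (fun m n => by
    simp only [Module.End.mul_apply, actL_tt, actR_tt])

variable (M N) in
noncomputable def actT : Env k A →ₐ[k] Module.End k (TT k A M N) :=
  Algebra.TensorProduct.lift (actL k A M N) (actR k A M N) (act_comm k A)

noncomputable instance : Module (Env k A) (TT k A M N) :=
  Module.compHom _ (actT k A M N).toRingHom

lemma smul_def_T (r : Env k A) (x : TT k A M N) : r • x = actT k A M N r x := rfl

noncomputable instance : IsScalarTower k (Env k A) (TT k A M N) where
  smul_assoc c r x := by rw [smul_def_T, smul_def_T, map_smul]; rfl

lemma pure_smul_tt (a : A) (b : Aᵐᵒᵖ) (m : M) (n : N) :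
    (a ⊗ₜ[k] b : Env k A) • tt k A m n = tt k A (lo k A a • m) (ro k A b • n) := by
  rw [smul_def_T, actT, Algebra.TensorProduct.lift_tmul, Module.End.mul_apply, actR_tt, actL_tt]

lemma map_env {X Y : Type} [AddCommGroup X] [AddCommGroup Y] [Module (Env k A) X]
    [Module (Env k A) Y] (f : X →+ Y) (h : ∀ a b x, f ((a ⊗ₜ[k] b : Env k A) • x) =
      (a ⊗ₜ[k] b : Env k A) • f x) (r : Env k A) (x : X) : f (r • x) = r • f x := by
  induction r using TensorProduct.induction_on with
  | zero =>
    change f ((0 : Env k A) • x) = (0 : Env k A) • f x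
    rw [zero_smul (Env k A) x, zero_smul (Env k A) (f x), map_zero]
  | tmul a b => exact h a b x
  | add r s hr hs => rw [add_smul, add_smul, map_add, hr, hs]

lemma LLin_of (f : M →ₗ[Env k A] M') : LLin k A (f.restrictScalars k) := fun a m => by simp
lemma RLin_of (f : M →ₗ[Env k A] M') : RLin k A (f.restrictScalars k) := fun a m => by simp

lemma mapT_pure (f : M →ₗ[Env k A] M') (g : N →ₗ[Env k A] N') (a : A) (b : Aᵐᵒᵖ)
    (x : TT k A M N) :
    mapT k A (f.restrictScalars k) (g.restrictScalars k) (RLin_of k A f) (LLin_of k A g)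
      ((a ⊗ₜ[k] b : Env k A) • x) = (a ⊗ₜ[k] b : Env k A) •
    mapT k A (f.restrictScalars k) (g.restrictScalars k) (RLin_of k A f) (LLin_of k A g) x := by
  refine TT_ind k A x ?_ ?_ ?_
  · rw [smul_zero, map_zero, smul_zero]
  · intro m n
    rw [pure_smul_tt, mapT_tt, mapT_tt, pure_smul_tt]
    simp only [LinearMap.restrictScalars_apply, LinearMap.map_smul]
  · intro x y hx hy
    rw [smul_add, map_add, map_add, smul_add, hx, hy]

noncomputable def mapTE (f : M →ₗ[Env k A] M') (g : N →ₗ[Env k A] N') :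
    TT k A M N →ₗ[Env k A] TT k A M' N' where
  toFun := mapT k A (f.restrictScalars k) (g.restrictScalars k) (RLin_of k A f) (LLin_of k A g)
  map_add' := map_add _
  map_smul' := map_env k A (mapT k A (f.restrictScalars k) (g.restrictScalars k) (RLin_of k A f)
      (LLin_of k A g)).toAddMonoidHom (mapT_pure k A f g)

lemma mapTE_tt (f : M →ₗ[Env k A] M') (g : N →ₗ[Env k A] N') (m : M) (n : N) :
    mapTE k A f g (tt k A m n) = tt k A (f m) (g n) :=
  mapT_tt k A _ _ (RLin_of k A f) (LLin_of k A g) m n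

lemma mapTE_coe (f : M →ₗ[Env k A] M') (g : N →ₗ[Env k A] N') (x : TT k A M N) :
    mapTE k A f g x = mapT k A (f.restrictScalars k) (g.restrictScalars k) (RLin_of k A f)
      (LLin_of k A g) x := rfl

/-- split sequences on the right -/
structure RSplit (f : M' →ₗ[Env k A] M) (g : M →ₗ[Env k A] M'') : Prop where
  ses : IsSES f g
  split : ∃ s : M'' →ₗ[k] M, RLin k A s ∧ ∀ x, g (s x) = x
structure LSplit (f : M' →ₗ[Env k A] M) (g : M →ₗ[Env k A] M'') : Prop where
  ses : IsSES f g
  split : ∃ s : M'' →ₗ[k] M, LLin k A s ∧ ∀ x, g (s x) = x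

lemma exists_retr {f : M' →ₗ[Env k A] M} {g : M →ₗ[Env k A] M''} (h : IsSES f g)
    (s : M'' →ₗ[k] M) (hs : ∀ x, g (s x) = x) :
    ∃ r : M →ₗ[k] M', (∀ x, r (f x) = x) ∧ (∀ x, f (r x) + s (g x) = x) ∧
      (∀ e : Env k A, (∀ x, s (e • x) = e • s x) → ∀ x, r (e • x) = e • r x) := by
  obtain ⟨r, hr⟩ := exists_lift_inj (R := k) (f := f.restrictScalars k) (g := g.restrictScalars k)
    h.inj h.exact (LinearMap.id - s ∘ₗ (g.restrictScalars k)) (fun x => by simp [hs])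
  simp only [LinearMap.restrictScalars_apply, LinearMap.sub_apply, LinearMap.id_apply,
    LinearMap.comp_apply] at hr
  refine ⟨r, fun x => h.inj ?_, fun x => ?_, fun e he x => h.inj ?_⟩
  · rw [hr, h.exact.apply_apply_eq_zero]; simp
  · rw [hr]; simp
  · rw [f.map_smul, hr, hr, g.map_smul, he, smul_sub]

lemma RSplit.tensor {f : M' →ₗ[Env k A] M} {g : M →ₗ[Env k A] M''} (h : RSplit k A f g) :
    IsSES (mapTE k A f (LinearMap.id : N →ₗ[Env k A] N)) (mapTE k A g LinearMap.id) := by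
  obtain ⟨h, s, hs, hgs⟩ := h
  obtain ⟨r, hr1, hr2, hr3⟩ := exists_retr k A h s hgs
  have hr : RLin k A r := fun a => hr3 _ (hs a)
  have e1 : ∀ x : TT k A M' N, mapT k A r LinearMap.id hr (idL k A) (mapTE k A f LinearMap.id x) = x :=
    fun x => TT_ind k A x (by simp) (fun m n => by rw [mapTE_tt, mapT_tt, hr1]; rfl)
      (fun x y hx hy => by simp [hx, hy])
  have e2 : ∀ x : TT k A M'' N,
      mapTE k A g LinearMap.id (mapT k A s LinearMap.id hs (idL k A) x) = x :=
    fun x => TT_ind k A x (by simp) (fun m n => by rw [mapT_tt, mapTE_tt, hgs]; rfl)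
      (fun x y hx hy => by simp [hx, hy])
  have e3 : ∀ x : TT k A M N, mapTE k A f LinearMap.id (mapT k A r LinearMap.id hr (idL k A) x) +
      mapT k A s LinearMap.id hs (idL k A) (mapTE k A g LinearMap.id x) = x :=
    fun x => TT_ind k A x (by simp) (fun m n => by
      rw [mapTE_tt, mapT_tt, mapT_tt, mapTE_tt]
      simp only [LinearMap.id_apply]
      rw [← add_tt, hr2])
      (fun x y hx hy => by
        simp only [map_add]
        rw [add_add_add_comm, hx, hy])
  have e4 : ∀ x : TT k A M' N, mapTE k A g LinearMap.id (mapTE k A f LinearMap.id x) = 0 :=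
    fun x => TT_ind k A x (by simp) (fun m n => by
        rw [mapTE_tt, mapTE_tt, h.exact.apply_apply_eq_zero]; simp [tt])
      (fun x y hx hy => by simp [hx, hy])
  refine ⟨Function.LeftInverse.injective e1, fun x => ⟨_, e2 x⟩, fun x => ⟨fun hx => ?_, ?_⟩⟩
  · refine ⟨mapT k A r LinearMap.id hr (idL k A) x, ?_⟩
    have := e3 x
    rwa [hx, map_zero, add_zero] at this
  · rintro ⟨y, rfl⟩; exact e4 y

lemma LSplit.tensor {f : M' →ₗ[Env k A] M} {g : M →ₗ[Env k A] M''} (h : LSplit k A f g) :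
    IsSES (mapTE k A (LinearMap.id : N →ₗ[Env k A] N) f) (mapTE k A LinearMap.id g) := by
  obtain ⟨h, s, hs, hgs⟩ := h
  obtain ⟨r, hr1, hr2, hr3⟩ := exists_retr k A h s hgs
  have hr : LLin k A r := fun a => hr3 _ (hs a)
  have e1 : ∀ x : TT k A N M', mapT k A LinearMap.id r (idR k A) hr (mapTE k A LinearMap.id f x) = x :=
    fun x => TT_ind k A x (by simp) (fun m n => by rw [mapTE_tt, mapT_tt, hr1]; rfl)
      (fun x y hx hy => by simp [hx, hy])
  have e2 : ∀ x : TT k A N M'',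
      mapTE k A LinearMap.id g (mapT k A LinearMap.id s (idR k A) hs x) = x :=
    fun x => TT_ind k A x (by simp) (fun m n => by rw [mapT_tt, mapTE_tt, hgs]; rfl)
      (fun x y hx hy => by simp [hx, hy])
  have e3 : ∀ x : TT k A N M, mapTE k A LinearMap.id f (mapT k A LinearMap.id r (idR k A) hr x) +
      mapT k A LinearMap.id s (idR k A) hs (mapTE k A LinearMap.id g x) = x :=
    fun x => TT_ind k A x (by simp) (fun m n => by
      rw [mapTE_tt, mapT_tt, mapT_tt, mapTE_tt]
      simp only [LinearMap.id_apply]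
      rw [← tt_add, hr2])
      (fun x y hx hy => by
        simp only [map_add]
        rw [add_add_add_comm, hx, hy])
  have e4 : ∀ x : TT k A N M', mapTE k A LinearMap.id g (mapTE k A LinearMap.id f x) = 0 :=
    fun x => TT_ind k A x (by simp) (fun m n => by
        rw [mapTE_tt, mapTE_tt, h.exact.apply_apply_eq_zero]; simp [tt])
      (fun x y hx hy => by simp [hx, hy])
  refine ⟨Function.LeftInverse.injective e1, fun x => ⟨_, e2 x⟩, fun x => ⟨fun hx => ?_, ?_⟩⟩
  · refine ⟨mapT k A LinearMap.id r (idR k A) hr x, ?_⟩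
    have := e3 x
    rwa [hx, map_zero, add_zero] at this
  · rintro ⟨y, rfl⟩; exact e4 y

end tensor

section proj

variable {k B R : Type} [Field k] [Ring B] [Algebra k B] [Ring R] [Algebra k R] (φ : B →ₐ[k] R)

/-- projectivity after restriction along `φ` -/
def PrR (M : Type) [AddCommGroup M] [Module R M] : Prop :=
  letI : Module B M := Module.compHom M φ.toRingHom
  Module.Projective B M

variable {M N L : Type} [AddCommGroup M] [AddCommGroup N] [AddCommGroup L]
    [Module R M] [Module R N] [Module R L]

lemma PrR.of_addEquiv (M0 : Type) [AddCommGroup M0] [Module B M0] [Module.Projective B M0]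
    (e : M0 ≃+ M) (he : ∀ b x, e (b • x) = φ b • e x) : PrR φ M := by
  letI : Module B M := Module.compHom M φ.toRingHom
  exact Module.Projective.of_equiv' (M := M0) (P := M) { e with map_smul' := he }

lemma PrR.of_equiv (e : M ≃ₗ[R] N) (h : PrR φ M) : PrR φ N := by
  letI : Module B M := Module.compHom M φ.toRingHom
  haveI : Module.Projective B M := h
  exact PrR.of_addEquiv φ M e.toAddEquiv (fun b x => e.map_smul (φ b) x)

lemma PrR.of_proj (hR : PrR φ R) [Module.Projective R M] : PrR φ M := by
  letI : Module B M := Module.compHom M φ.toRingHom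
  letI : Module B R := Module.compHom R φ.toRingHom
  haveI : Module.Projective B R := hR
  obtain ⟨s, hs⟩ := Module.projective_def'.1 (inferInstance : Module.Projective R M)
  have hs' : ∀ x, Finsupp.linearCombination R id (s x) = x := fun x => LinearMap.congr_fun hs x
  let s' : M →ₗ[B] (M →₀ R) :=
    { toFun := s
      map_add' := map_add s
      map_smul' := fun b x => (s.map_smul (φ b) x).trans (by ext; rfl) }
  let t' : (M →₀ R) →ₗ[B] M :=
    { toFun := Finsupp.linearCombination R id
      map_add' := map_add _
      map_smul' := fun b x => by
        rw [show b • x = φ b • x by ext; rfl, map_smul]; rfl }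
  classical
  haveI : Module.Projective B (M →₀ R) :=
    Module.Projective.of_equiv' (finsuppLequivDFinsupp (ι := M) (M := R) B).symm
  exact Module.Projective.of_split s' t' (LinearMap.ext hs')

lemma PrR.section (h : PrR φ L) (g : N →ₗ[R] L) (hg : Function.Surjective g) [Module k N]
    [Module k L] [IsScalarTower k R N] [IsScalarTower k R L] :
    ∃ s : L →ₗ[k] N, (∀ b x, s (φ b • x) = φ b • s x) ∧ ∀ x, g (s x) = x := by
  letI : Module B L := Module.compHom L φ.toRingHom
  letI : Module B N := Module.compHom N φ.toRingHom
  haveI : Module.Projective B L := h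
  let g' : N →ₗ[B] L := { g with map_smul' := fun b x => g.map_smul (φ b) x }
  obtain ⟨s, hs⟩ := LinearMap.exists_rightInverse_of_surjective g' (LinearMap.range_eq_top.2 hg)
  have key : ∀ b x, s (φ b • x) = φ b • s x := fun b x => s.map_smul b x
  refine ⟨⟨s.toAddHom, fun c x => ?_⟩, key, fun x => LinearMap.congr_fun hs x⟩
  have := key (algebraMap k B c) x
  rw [φ.commutes, algebraMap_smul, algebraMap_smul] at this
  exact this

lemma PrR.of_summand (h : PrR φ N) (i : M →ₗ[R] N) (r : N → M) (hra : ∀ x y, r (x + y) = r x + r y)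
    (hr : ∀ b x, r (φ b • x) = φ b • r x) (hri : ∀ x, r (i x) = x) : PrR φ M := by
  letI : Module B M := Module.compHom M φ.toRingHom
  letI : Module B N := Module.compHom N φ.toRingHom
  haveI : Module.Projective B N := h
  exact Module.Projective.of_split (P := M) (M := N)
    { i with map_smul' := fun b x => i.map_smul (φ b) x }
    ⟨⟨r, hra⟩, hr⟩ (LinearMap.ext hri)

end proj

section proj2
variable (k A : Type) [Field k] [Ring A] [Algebra k A]

lemma PrR_lo : PrR (lo k A) (Env k A) :=
  PrR.of_addEquiv _ (A ⊗[k] Aᵐᵒᵖ) (AddEquiv.refl _) (fun b x => by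
    simp only [AddEquiv.refl_apply]
    induction x using TensorProduct.induction_on with
    | zero => simp
    | tmul x y => simp [TensorProduct.smul_tmul']
    | add x y hx hy => rw [smul_add, smul_add, hx, hy])

lemma PrR_ro : PrR (ro k A) (Env k A) :=
  PrR.of_addEquiv _ (Aᵐᵒᵖ ⊗[k] A) (TensorProduct.comm k Aᵐᵒᵖ A).toAddEquiv (fun b x => by
    induction x using TensorProduct.induction_on with
    | zero => simp
    | tmul x y => simp [TensorProduct.smul_tmul']
    | add x y hx hy => rw [smul_add, map_add, map_add, smul_add, hx, hy])

noncomputable instance regMod : Module (Env k A) A := TensorProduct.Algebra.module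

lemma reg_smul (a : A) (b : Aᵐᵒᵖ) (x : A) : (a ⊗ₜ[k] b : Env k A) • x = a * x * b.unop := by
  change TensorProduct.Algebra.moduleAux (a ⊗ₜ[k] b) x = _
  simp [TensorProduct.Algebra.moduleAux_apply, mul_assoc]

instance regTower : IsScalarTower k (Env k A) A where
  smul_assoc c r x := by
    induction r using TensorProduct.induction_on with
    | zero =>
      change (c • (0 : Env k A)) • x = c • ((0 : Env k A) • x)
      have h0 : (0 : Env k A) • x = 0 := zero_smul (Env k A) x
      have h1 : c • (0 : Env k A) = 0 := smul_zero c
      rw [h1, h0, smul_zero]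
    | tmul a b => rw [TensorProduct.smul_tmul', reg_smul, reg_smul]; simp
    | add r s hr hs => rw [smul_add, add_smul, add_smul, smul_add, hr, hs]

lemma lo_smul_reg (a x : A) : lo k A a • x = a * x := by
  simp [reg_smul]
lemma ro_smul_reg (a : Aᵐᵒᵖ) (x : A) : ro k A a • x = x * a.unop := by
  simp [reg_smul]

lemma PrR_lo_reg : PrR (lo k A) A :=
  PrR.of_addEquiv _ A (AddEquiv.refl _) (fun b x => (lo_smul_reg k A b x).symm)

lemma PrR_ro_reg : PrR (ro k A) A :=
  PrR.of_addEquiv _ Aᵐᵒᵖ MulOpposite.opAddEquiv.symm (fun b x => (ro_smul_reg k A b _).symm)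

/-- one step -/
lemma split_step {M' M M'' : Type} [AddCommGroup M'] [AddCommGroup M] [AddCommGroup M'']
    [Module k M'] [Module k M] [Module k M''] [Module (Env k A) M'] [Module (Env k A) M]
    [Module (Env k A) M''] [IsScalarTower k (Env k A) M'] [IsScalarTower k (Env k A) M]
    [IsScalarTower k (Env k A) M''] {f : M' →ₗ[Env k A] M} {g : M →ₗ[Env k A] M''}
    (h : IsSES f g) [Module.Projective (Env k A) M] (hl : PrR (lo k A) M'')
    (hr : PrR (ro k A) M'') :
    LSplit k A f g ∧ RSplit k A f g ∧ PrR (lo k A) M' ∧ PrR (ro k A) M' := by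
  obtain ⟨s, hs, hgs⟩ := hl.section _ g h.surj
  obtain ⟨r, hr1, hr2, hr3⟩ := exists_retr k A h s hgs
  obtain ⟨s', hs', hgs'⟩ := hr.section _ g h.surj
  obtain ⟨r', hr1', hr2', hr3'⟩ := exists_retr k A h s' hgs'
  refine ⟨⟨h, s, hs, hgs⟩, ⟨h, s', hs', hgs'⟩, ?_, ?_⟩
  · exact PrR.of_summand _ (PrR.of_proj _ (PrR_lo k A) (M := M)) f r (map_add r)
      (fun b => hr3 _ (hs b)) hr1
  · exact PrR.of_summand _ (PrR.of_proj _ (PrR_ro k A) (M := M)) f r' (map_add r')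
      (fun b => hr3' _ (hs' b)) hr1'

end proj2

section sep
variable (k A : Type) [Field k] [Ring A] [Algebra k A]

/-- averaging -/
noncomputable def avg (f : A →ₗ[k] A) : Env k A →ₗ[k] (A →ₗ[k] A) :=
  TensorProduct.lift (LinearMap.mk₂ k
    (fun (a : A) (b : Aᵐᵒᵖ) => LinearMap.mulLeft k a ∘ₗ f ∘ₗ LinearMap.mulLeft k b.unop)
    (fun a a' b => by ext x; simp [add_mul])
    (fun c a b => by ext x; simp)
    (fun a b b' => by ext x; simp [add_mul, mul_add])
    (fun c a b => by ext x; simp))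

lemma avg_tmul (f : A →ₗ[k] A) (a : A) (b : Aᵐᵒᵖ) (x : A) :
    avg k A f (a ⊗ₜ b) x = a * f (b.unop * x) := by
  simp [avg]

lemma avg_lo (f : A →ₗ[k] A) (c : A) (r : Env k A) (x : A) :
    avg k A f (lo k A c * r) x = c * avg k A f r x := by
  induction r using TensorProduct.induction_on with
  | zero => simp
  | tmul a b => 
    rw [Algebra.TensorProduct.includeLeft_apply, Algebra.TensorProduct.tmul_mul_tmul, avg_tmul,
      avg_tmul, one_mul, mul_assoc]
  | add r s hr hs => rw [mul_add, map_add, map_add, LinearMap.add_apply, LinearMap.add_apply, hr,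
      hs, mul_add]

lemma avg_ro (f : A →ₗ[k] A) (c : A) (r : Env k A) (x : A) :
    avg k A f (ro k A (MulOpposite.op c) * r) x = avg k A f r (c * x) := by
  induction r using TensorProduct.induction_on with
  | zero => simp
  | tmul a b => 
    rw [Algebra.TensorProduct.includeRight_apply, Algebra.TensorProduct.tmul_mul_tmul, avg_tmul,
      avg_tmul, one_mul, MulOpposite.unop_mul, MulOpposite.unop_op, mul_assoc]
  | add r s hr hs => rw [mul_add, map_add, map_add, LinearMap.add_apply, LinearMap.add_apply, hr,
      hs]

lemma avg_mem (f : A →ₗ[k] A) (I : Submodule A A) (hf : ∀ x, f x ∈ I) (r : Env k A) (x : A) :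
    avg k A f r x ∈ I := by
  induction r using TensorProduct.induction_on with
  | zero => simp
  | tmul a b => rw [avg_tmul]; exact I.smul_mem a (hf _)
  | add r s hr hs => rw [map_add, LinearMap.add_apply]; exact I.add_mem hr hs

lemma avg_id (f : A →ₗ[k] A) (I : Submodule A A) (hf : ∀ x ∈ I, f x = x) (r : Env k A) (x : A)
    (hx : x ∈ I) : avg k A f r x = (r • (1 : A)) * x := by
  induction r using TensorProduct.induction_on with
  | zero =>
    have h0 : (0 : Env k A) • (1 : A) = 0 := zero_smul (Env k A) (1 : A)
    rw [map_zero, LinearMap.zero_apply]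
    exact ((congrArg (· * x) h0).trans (zero_mul x)).symm
  | tmul a b => rw [avg_tmul, hf (b.unop * x) (I.smul_mem b.unop hx), reg_smul, mul_one, mul_assoc]
  | add r s hr hs => rw [map_add, LinearMap.add_apply, hr, hs, add_smul, add_mul]

lemma semisimple_of_proj [Module.Projective (Env k A) A] : IsSemisimpleRing A := by
  have hsurj : Function.Surjective (LinearMap.toSpanSingleton (Env k A) A 1) := fun a =>
    ⟨lo k A a, by rw [LinearMap.toSpanSingleton_apply, lo_smul_reg, mul_one]⟩
  obtain ⟨σ, hσ⟩ := LinearMap.exists_rightInverse_of_surjective _ (LinearMap.range_eq_top.2 hsurj)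
  have he : σ 1 • (1 : A) = 1 := by
    have := LinearMap.congr_fun hσ 1
    rwa [LinearMap.comp_apply, LinearMap.toSpanSingleton_apply] at this
  have hc : ∀ a : A, lo k A a * σ 1 = ro k A (MulOpposite.op a) * σ 1 := by
    intro a
    rw [← smul_eq_mul, ← smul_eq_mul, ← σ.map_smul, ← σ.map_smul, lo_smul_reg, ro_smul_reg,
      mul_one, one_mul, MulOpposite.unop_op]
  suffices h : ComplementedLattice (Submodule A A) from { toComplementedLattice := h }
  refine ⟨fun I => ?_⟩
  obtain ⟨g, hg⟩ := LinearMap.exists_leftInverse_of_injective (I.restrictScalars k).subtype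
    (Submodule.ker_subtype _)
  let f : A →ₗ[k] A := (I.restrictScalars k).subtype ∘ₗ g
  have hf1 : ∀ x, f x ∈ I := fun x => (g x).2
  have hf2 : ∀ x ∈ I, f x = x := fun x hx =>
    congrArg Subtype.val (LinearMap.congr_fun hg ⟨x, hx⟩)
  let p : A →ₗ[A] I :=
    { toFun := fun x => ⟨avg k A f (σ 1) x, avg_mem k A f I hf1 _ _⟩
      map_add' := fun x y => Subtype.ext (map_add _ _ _)
      map_smul' := fun a x => Subtype.ext (by
        change avg k A f (σ 1) (a * x) = a * avg k A f (σ 1) x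
        rw [← avg_ro, ← hc, avg_lo]) }
  exact ⟨_, LinearMap.isCompl_of_proj (f := p) (fun x => Subtype.ext (by
    change avg k A f (σ 1) x = x
    rw [avg_id k A f I hf2 _ _ x.2, he, one_mul]))⟩

end sep

section signs
universe w v u
variable {C : Type u} [Category.{v} C] [Abelian C] [HasExt.{w} C]

lemma zs_comp {X Y Z : C} {a b c : ℕ} (m : ℤ) (α : Ext X Y a) (β : Ext Y Z b) (h : a + b = c) :
    (m • α).comp β h = m • α.comp β h :=
  map_zsmul (β.postcomp X h) m α
lemma comp_zs {X Y Z : C} {a b c : ℕ} (m : ℤ) (α : Ext X Y a) (β : Ext Y Z b) (h : a + b = c) :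
    α.comp (m • β) h = m • α.comp β h :=
  map_zsmul (α.precomp Z h) m β

/-- iterated product -/
noncomputable def chain {T : ℕ → C} (a : ∀ i, Ext (T i) (T (i + 1)) 1) : ∀ i, Ext (T 0) (T i) i
  | 0 => Ext.mk₀ (𝟙 _)
  | i + 1 => (chain a i).comp (a i) rfl

lemma chain_succ {T : ℕ → C} (a : ∀ i, Ext (T i) (T (i + 1)) 1) (i : ℕ) :
    chain a (i + 1) = (chain a i).comp (a i) rfl := rfl

lemma chain_nat {T T' : ℕ → C} (a : ∀ i, Ext (T i) (T (i + 1)) 1)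
    (a' : ∀ i, Ext (T' i) (T' (i + 1)) 1) (l : ∀ i, Ext (T i) (T' i) 0)
    (h : ∀ i, (a i).comp (l (i + 1)) (add_zero 1) = (l i).comp (a' i) (zero_add 1)) (i : ℕ) :
    (chain a i).comp (l i) (add_zero i) = (l 0).comp (chain a' i) (zero_add i) := by
  induction i with
  | zero => simp [chain]
  | succ i ih =>
    rw [chain_succ, chain_succ, Ext.comp_assoc_of_third_deg_zero, h,
      ← Ext.comp_assoc_of_second_deg_zero, ih, Ext.comp_assoc _ _ _ _ _ (by omega)]

variable {T : ℕ → ℕ → C} (a : ∀ i j, Ext (T i j) (T (i + 1) j) 1)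
    (b : ∀ i j, Ext (T i j) (T i (j + 1)) 1)
    (anti : ∀ i j, (b i j).comp (a i (j + 1)) rfl = - (a i j).comp (b (i + 1) j) rfl)

include anti in
lemma sign1 (i j : ℕ) (m : ℕ) (h : 1 + i = m) (h' : i + 1 = m) :
    (b 0 j).comp (chain (fun i => a i (j + 1)) i) h =
      (-1 : ℤ) ^ i • (chain (fun i => a i j) i).comp (b i j) h' := by
  subst h'
  induction i with
  | zero => simp [chain]
  | succ i ih =>
    rw [chain_succ, chain_succ, ← Ext.comp_assoc (b 0 j) _ _ (add_comm 1 i) _ (by omega), ih,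
      zs_comp, Ext.comp_assoc _ _ _ _ (rfl : 1 + 1 = 2) (by omega),
      Ext.comp_assoc _ _ _ _ (rfl : 1 + 1 = 2) (by omega), anti, Ext.comp_neg, pow_succ,
      mul_neg_one, neg_smul, smul_neg]

include anti in
lemma sign2 (n j : ℕ) (m : ℕ) (h : j + n = m) (h' : n + j = m) :
    (chain (fun j => b 0 j) j).comp (chain (fun i => a i j) n) h =
      (-1 : ℤ) ^ (n * j) • (chain (fun i => a i 0) n).comp (chain (fun j => b n j) j) h' := by
  subst h'
  induction j with
  | zero => simp [chain]
  | succ j ih =>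
    rw [chain_succ, chain_succ, Ext.comp_assoc _ _ _ _ (add_comm 1 n) (by omega),
      sign1 a b anti n j _ _ rfl, comp_zs, ← Ext.comp_assoc _ _ _ (add_comm j n) _ (by omega),
      ih, zs_comp, Ext.comp_assoc _ _ _ _ rfl (by omega), smul_smul, mul_add, mul_one, pow_add,
      mul_comm]

include anti in
lemma core (n : ℕ) (hn : Odd n) {Z : ℕ → C} (α : ∀ i, Ext (Z i) (Z (i + 1)) 1)
    (l0 : ∀ j, Ext (Z j) (T 0 j) 0) (r0 : ∀ i, Ext (Z i) (T i 0) 0)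
    (ln : ∀ j, Ext (Z j) (T n j) 0) (rn : ∀ i, Ext (Z i) (T i n) 0)
    (hl0 : ∀ i, (α i).comp (l0 (i + 1)) (add_zero 1) = (l0 i).comp (b 0 i) (zero_add 1))
    (hr0 : ∀ i, (α i).comp (r0 (i + 1)) (add_zero 1) = (r0 i).comp (a i 0) (zero_add 1))
    (hln : ∀ i, (α i).comp (ln (i + 1)) (add_zero 1) = (ln i).comp (b n i) (zero_add 1))
    (hrn : ∀ i, (α i).comp (rn (i + 1)) (add_zero 1) = (rn i).comp (a i n) (zero_add 1))
    (h00 : l0 0 = r0 0) (hnn : ln n = rn n) (θ : Ext (Z n) (Z 0) 0)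
    (h0n : l0 n = θ.comp (rn 0) (zero_add 0)) (hn0 : r0 n = θ.comp (ln 0) (zero_add 0))
    (ret : Ext (T n n) (Z n) 0) (hret : (rn n).comp ret (zero_add 0) = Ext.mk₀ (𝟙 _)) :
    (2 : ℤ) • (chain α n).comp (θ.comp (chain α n) (zero_add n)) (rfl : n + n = n + n) = 0 := by
  have e1 : (l0 0).comp ((chain (fun j => b 0 j) n).comp (chain (fun i => a i n) n) rfl)
      (zero_add (n + n)) =
      ((chain α n).comp (θ.comp (chain α n) (zero_add n)) (rfl : n + n = n + n)).comp (rn n)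
        (add_zero (n + n)) := by
    rw [← Ext.comp_assoc _ _ _ (zero_add n) _ (by omega), ← chain_nat _ _ _ hl0, h0n,
      Ext.comp_assoc_of_second_deg_zero, Ext.comp_assoc_of_second_deg_zero,
      ← chain_nat _ _ _ hrn, Ext.comp_assoc_of_third_deg_zero, Ext.comp_assoc_of_third_deg_zero]
  have e2 : (l0 0).comp ((chain (fun i => a i 0) n).comp (chain (fun j => b n j) n) rfl)
      (zero_add (n + n)) =
      ((chain α n).comp (θ.comp (chain α n) (zero_add n)) (rfl : n + n = n + n)).comp (rn n)
        (add_zero (n + n)) := by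
    rw [h00, ← Ext.comp_assoc _ _ _ (zero_add n) _ (by omega), ← chain_nat _ _ _ hr0, hn0,
      Ext.comp_assoc_of_second_deg_zero, Ext.comp_assoc_of_second_deg_zero,
      ← chain_nat _ _ _ hln, Ext.comp_assoc_of_third_deg_zero, Ext.comp_assoc_of_third_deg_zero,
      hnn]
  have e3 := sign2 a b anti n n (n + n) rfl rfl
  rw [(hn.mul hn).neg_one_pow, neg_smul, one_smul] at e3
  rw [e3, Ext.comp_neg, e2] at e1
  set w := (chain α n).comp (θ.comp (chain α n) (zero_add n)) (rfl : n + n = n + n) with hw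
  have e4 : (w.comp (rn n) (add_zero _)).comp ret (add_zero _) = w := by
    rw [Ext.comp_assoc_of_third_deg_zero, hret, Ext.comp_mk₀_id]
  have e5 : - w = w := by
    conv_rhs => rw [← e4, ← e1, Ext.neg_comp, e4]
  rw [two_smul]
  nth_rewrite 1 [← e5]
  exact neg_add_cancel w

end signs

section units
variable (k A : Type) [Field k] [Ring A] [Algebra k A]
variable {M N N' : Type} [AddCommGroup M] [AddCommGroup N] [AddCommGroup N']
  [Module k M] [Module k N] [Module k N']
  [Module (Env k A) M] [Module (Env k A) N] [Module (Env k A) N']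
  [IsScalarTower k (Env k A) M] [IsScalarTower k (Env k A) N] [IsScalarTower k (Env k A) N']

lemma lo_u (u : A →ₗ[Env k A] M) (a : A) : lo k A a • u 1 = u a := by
  rw [← u.map_smul, lo_smul_reg, mul_one]
lemma ro_u (u : A →ₗ[Env k A] M) (b : Aᵐᵒᵖ) : ro k A b • u 1 = u b.unop := by
  rw [← u.map_smul, ro_smul_reg, one_mul]

noncomputable def lam (u : A →ₗ[Env k A] M) : N →ₗ[Env k A] TT k A M N where
  toFun n := tt k A (u 1) n
  map_add' x y := tt_add k A _ _ _
  map_smul' := map_env k A ⟨⟨fun n => tt k A (u 1) n, by simp [tt]⟩, fun x y => tt_add k A _ _ _⟩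
    (fun a b x => by
      change tt k A (u 1) ((a ⊗ₜ[k] b : Env k A) • x) = (a ⊗ₜ[k] b : Env k A) • tt k A (u 1) x
      rw [pure_smul_tt, ← lo_mul_ro, mul_smul, ← tt_bal, lo_u, ro_u, MulOpposite.unop_op])

noncomputable def rho (u : A →ₗ[Env k A] N) : M →ₗ[Env k A] TT k A M N where
  toFun m := tt k A m (u 1)
  map_add' x y := add_tt k A _ _ _
  map_smul' := map_env k A ⟨⟨fun m => tt k A m (u 1), by simp [tt]⟩, fun x y => add_tt k A _ _ _⟩
    (fun a b x => by
      change tt k A ((a ⊗ₜ[k] b : Env k A) • x) (u 1) = (a ⊗ₜ[k] b : Env k A) • tt k A x (u 1)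
      rw [pure_smul_tt, ← ro_mul_lo, mul_smul, ← MulOpposite.op_unop b, tt_bal, lo_u, ro_u,
        MulOpposite.unop_op])

lemma lam_apply (u : A →ₗ[Env k A] M) (n : N) : lam k A u n = tt k A (u 1) n := rfl
lemma rho_apply (u : A →ₗ[Env k A] N) (m : M) : rho k A u m = tt k A m (u 1) := rfl

lemma swap_tt (u : A →ₗ[Env k A] M) (v : A →ₗ[Env k A] N) (a : A) :
    tt k A (u 1) (v a) = tt k A (u a) (v 1) := by
  rw [← lo_u k A v a, ← tt_bal, ro_u, MulOpposite.unop_op]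

lemma lam_nat (u : A →ₗ[Env k A] M) (f : N →ₗ[Env k A] N') (x : N) :
    mapTE k A LinearMap.id f (lam k A u x) = lam k A u (f x) := by
  rw [lam_apply, mapTE_tt]; rfl
lemma rho_nat (u : A →ₗ[Env k A] M) (f : N →ₗ[Env k A] N') (x : N) :
    mapTE k A f LinearMap.id (rho k A u x) = rho k A u (f x) := by
  rw [rho_apply, mapTE_tt]; rfl

noncomputable def rtk (v : N →ₗ[Env k A] A) : TT k A M N →ₗ[k] M :=
  liftT k A (LinearMap.mk₂ k (fun (m : M) (n : N) => ro k A (MulOpposite.op (v n)) • m)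
    (fun m m' n => smul_add _ _ _)
    (fun c m n => smul_comm _ _ _)
    (fun m n n' => by rw [map_add, MulOpposite.op_add, map_add, add_smul])
    (fun c m n => by
      rw [show v (c • n) = c • v n from (v.restrictScalars k).map_smul c n, MulOpposite.op_smul,
        map_smul, smul_assoc]))
    (fun a m n => by
      simp only [LinearMap.mk₂_apply]
      rw [v.map_smul, lo_smul_reg, smul_smul, ← map_mul, MulOpposite.op_mul])

lemma rtk_tt (v : N →ₗ[Env k A] A) (m : M) (n : N) :
    rtk k A v (tt k A m n) = ro k A (MulOpposite.op (v n)) • m := by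
  rw [rtk, liftT_tt]; rfl

lemma rtk_pure (v : N →ₗ[Env k A] A) (a : A) (b : Aᵐᵒᵖ) (x : TT k A M N) :
    rtk k A v ((a ⊗ₜ[k] b : Env k A) • x) = (a ⊗ₜ[k] b : Env k A) • rtk k A v x := by
  refine TT_ind k A x ?_ ?_ ?_
  · rw [smul_zero, map_zero, smul_zero]
  · intro m n
    rw [pure_smul_tt, rtk_tt, rtk_tt, v.map_smul, ro_smul_reg, smul_smul, smul_smul,
      MulOpposite.op_mul, MulOpposite.op_unop, map_mul, ← ro_mul_lo, mul_assoc, mul_assoc,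
      ro_mul_lo, lo_mul_ro]
  · intro x y hx hy
    rw [smul_add, map_add, map_add, smul_add, hx, hy]

noncomputable def rt (v : N →ₗ[Env k A] A) : TT k A M N →ₗ[Env k A] M where
  toFun := rtk k A v
  map_add' := map_add _
  map_smul' := map_env k A (rtk k A v).toAddMonoidHom (rtk_pure k A v)

lemma rt_rho (u : A ≃ₗ[Env k A] N) (m : M) :
    rt k A u.symm.toLinearMap (rho k A u.toLinearMap m) = m := by
  change rtk k A _ (tt k A m (u 1)) = m
  rw [rtk_tt]
  have : u.symm.toLinearMap (u 1) = 1 := u.symm_apply_apply 1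
  rw [this, MulOpposite.op_one, map_one, one_smul]

end units

section final
variable (k A : Type) [Field k] [Ring A] [Algebra k A]
  {Z Q : ℕ → Type} [∀ i, AddCommGroup (Z i)] [∀ i, AddCommGroup (Q i)]
  [∀ i, Module k (Z i)] [∀ i, Module k (Q i)] [∀ i, Module (Env k A) (Z i)]
  [∀ i, Module (Env k A) (Q i)] [∀ i, IsScalarTower k (Env k A) (Z i)]
  [∀ i, IsScalarTower k (Env k A) (Q i)]
  {f : ∀ i, Z (i + 1) →ₗ[Env k A] Q i} {g : ∀ i, Q i →ₗ[Env k A] Z i} {n : ℕ}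
  (hL : ∀ i < n, LSplit k A (f i) (g i)) (hR : ∀ i < n, RSplit k A (f i) (g i))

noncomputable def al (i : ℕ) :
    Ext (ModuleCat.of (Env k A) (Z i)) (ModuleCat.of (Env k A) (Z (i + 1))) 1 :=
  if h : i < n then (hL i h).ses.cls else 0

noncomputable def aT (i j : ℕ) : Ext (ModuleCat.of (Env k A) (TT k A (Z i) (Z j)))
    (ModuleCat.of (Env k A) (TT k A (Z (i + 1)) (Z j))) 1 :=
  if h : i < n then ((hR i h).tensor k A (N := Z j)).cls else 0

noncomputable def bT (i j : ℕ) : Ext (ModuleCat.of (Env k A) (TT k A (Z i) (Z j)))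
    (ModuleCat.of (Env k A) (TT k A (Z i) (Z (j + 1)))) 1 :=
  if h : j < n then ((hL j h).tensor k A (N := Z i)).cls else 0

lemma mapTE_swap {M M' N N' : Type} [AddCommGroup M] [AddCommGroup N] [AddCommGroup M']
    [AddCommGroup N'] [Module k M] [Module k N] [Module k M'] [Module k N']
    [Module (Env k A) M] [Module (Env k A) N] [Module (Env k A) M'] [Module (Env k A) N']
    [IsScalarTower k (Env k A) M] [IsScalarTower k (Env k A) N] [IsScalarTower k (Env k A) M']
    [IsScalarTower k (Env k A) N'] (p : M →ₗ[Env k A] M') (q : N →ₗ[Env k A] N')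
    (x : TT k A M N) : mapTE k A p LinearMap.id (mapTE k A LinearMap.id q x) =
      mapTE k A LinearMap.id q (mapTE k A p LinearMap.id x) := by
  refine TT_ind k A x (by simp) (fun m n => ?_) (fun x y hx hy => by
    rw [map_add, map_add, map_add, map_add, hx, hy])
  rw [mapTE_tt, mapTE_tt, mapTE_tt, mapTE_tt]; rfl

lemma antiT (i j : ℕ) : (bT k A hL i j).comp (aT k A hR i (j + 1)) rfl =
    - (aT k A hR i j).comp (bT k A hL (i + 1) j) rfl := by
  unfold aT bT
  split_ifs with hj hi hi
  · exact anti ((hL j hj).tensor k A (N := Z (i + 1))) ((hL j hj).tensor k A (N := Q i))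
      ((hL j hj).tensor k A (N := Z i)) ((hR i hi).tensor k A (N := Z (j + 1)))
      ((hR i hi).tensor k A (N := Q j)) ((hR i hi).tensor k A (N := Z j))
      (mapTE_swap k A _ _) (mapTE_swap k A _ _) (mapTE_swap k A _ _) (mapTE_swap k A _ _)
  all_goals simp

lemma al_lam (m : ℕ) (u : A →ₗ[Env k A] Z m) (i : ℕ) :
    (al k A hL i).comp (xm (lam k A u)) (add_zero 1) =
      (xm (lam k A u)).comp (bT k A hL m i) (zero_add 1) := by
  unfold al bT
  split_ifs with hi
  · exact IsSES.naturality _ _ _ (lam k A u) _ (lam_nat k A u (f i)) (lam_nat k A u (g i))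
  · simp

lemma al_rho (m : ℕ) (u : A →ₗ[Env k A] Z m) (i : ℕ) :
    (al k A hL i).comp (xm (rho k A u)) (add_zero 1) =
      (xm (rho k A u)).comp (aT k A hR i m) (zero_add 1) := by
  unfold al aT
  split_ifs with hi
  · exact IsSES.naturality _ _ _ (rho k A u) _ (rho_nat k A u (f i)) (rho_nat k A u (g i))
  · simp

lemma cancel_chain (hP : ∀ i < n, Module.Projective (Env k A) (Q i))
    {Y : ModuleCat.{0} (Env k A)} (i : ℕ) (hi : i ≤ n) {m m' : ℕ} (hm : 1 ≤ m) (h : i + m = m')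
    (z : Ext (ModuleCat.of (Env k A) (Z i)) Y m) (hz : (chain (al k A hL) i).comp z h = 0) :
    z = 0 := by
  induction i generalizing m m' with
  | zero =>
    obtain rfl : m = m' := by omega
    simpa [chain] using hz
  | succ i ih =>
    rw [chain_succ, Ext.comp_assoc _ _ _ _ rfl (by omega)] at hz
    have h1 := ih (by omega) (by omega) _ _ hz
    have hi' : i < n := by omega
    rw [al, dif_pos hi'] at h1
    haveI := hP i hi'
    exact (hL i hi').ses.cancel hm rfl z h1

include hL hR in
lemma proj_of_odd (hk : (2 : k) ≠ 0) (hP : ∀ i < n, Module.Projective (Env k A) (Q i))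
    (u0 : A ≃ₗ[Env k A] Z 0) (un : A ≃ₗ[Env k A] Z n) (hn : Odd n) :
    Module.Projective (Env k A) A := by
  have hn1 : 1 ≤ n := hn.pos
  have key := core (aT k A hR) (bT k A hL) (antiT k A hL hR) n hn
    (Z := fun i => ModuleCat.of (Env k A) (Z i)) (al k A hL)
    (fun j => xm (lam k A u0.toLinearMap)) (fun j => xm (rho k A u0.toLinearMap))
    (fun j => xm (lam k A un.toLinearMap)) (fun j => xm (rho k A un.toLinearMap))
    (al_lam k A hL 0 _) (al_rho k A hL hR 0 _) (al_lam k A hL n _) (al_rho k A hL hR n _)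
    (by
      congr 1; ext x
      obtain ⟨a, rfl⟩ := u0.surjective x
      exact swap_tt k A u0.toLinearMap u0.toLinearMap a)
    (by
      congr 1; ext x
      obtain ⟨a, rfl⟩ := un.surjective x
      exact swap_tt k A un.toLinearMap un.toLinearMap a)
    (xm (u0.toLinearMap ∘ₗ un.symm.toLinearMap))
    (by
      rw [xm_comp]
      congr 1; ext x
      obtain ⟨a, rfl⟩ := un.surjective x
      refine (swap_tt k A u0.toLinearMap un.toLinearMap a).trans ?_
      simp [rho_apply])
    (by
      rw [xm_comp]
      congr 1; ext x
      obtain ⟨a, rfl⟩ := un.surjective x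
      refine (swap_tt k A un.toLinearMap u0.toLinearMap a).symm.trans ?_
      simp [lam_apply])
    (xm (rt k A un.symm.toLinearMap))
    (by
      rw [xm_comp]
      have : rt k A un.symm.toLinearMap ∘ₗ rho k A un.toLinearMap =
          (LinearMap.id : Z n →ₗ[Env k A] Z n) := LinearMap.ext (rt_rho k A un)
      rw [this]; rfl)
  rw [← comp_zs] at key
  have k2 := cancel_chain k A hL hP n le_rfl hn1 _ _ key
  rw [← comp_zs] at k2
  have k3 : (2 : ℤ) • chain (al k A hL) n = 0 := by
    have := congrArg (fun z => (xm (un.toLinearMap ∘ₗ u0.symm.toLinearMap)).comp z (zero_add n)) k2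
    simp only [Ext.comp_zero] at this
    rw [← Ext.comp_assoc_of_second_deg_zero, xm_comp] at this
    have e : (u0.toLinearMap ∘ₗ un.symm.toLinearMap) ∘ₗ un.toLinearMap ∘ₗ u0.symm.toLinearMap =
        (LinearMap.id : Z 0 →ₗ[Env k A] Z 0) := by ext x; simp
    rw [e] at this
    exact (Ext.mk₀_id_comp _).symm.trans this
  obtain ⟨j, rfl⟩ : ∃ j, n = j + 1 := ⟨n - 1, by omega⟩
  rw [chain_succ, ← comp_zs] at k3
  have k4 := cancel_chain k A hL hP j (by omega) le_rfl _ _ k3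
  have hj : j < j + 1 := by omega
  rw [al, dif_pos hj] at k4
  obtain ⟨ψ, hψ⟩ := (hL j hj).ses.extend (LinearMap.id + LinearMap.id) (by
    have : xm (LinearMap.id + LinearMap.id : Z (j + 1) →ₗ[Env k A] Z (j + 1)) =
        Ext.mk₀ (𝟙 (ModuleCat.of (Env k A) (Z (j + 1)))) +
        Ext.mk₀ (𝟙 (ModuleCat.of (Env k A) (Z (j + 1)))) := by
      rw [← Ext.mk₀_add]; rfl
    rw [this, Ext.comp_add, ← two_smul ℤ]
    exact (congrArg ((2 : ℤ) • ·) (Ext.comp_mk₀_id _)).trans k4)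
  haveI := hP j hj
  have : Module.Projective (Env k A) (Z (j + 1)) :=
    Module.Projective.of_split (f j) ((2 : k)⁻¹ • ψ) (by
      ext x
      have := LinearMap.congr_fun hψ x
      simp only [LinearMap.comp_apply, LinearMap.add_apply, LinearMap.id_apply] at this
      rw [LinearMap.comp_apply, LinearMap.smul_apply, this, ← two_smul k, smul_smul,
        inv_mul_cancel₀ hk, one_smul]; rfl)
  exact Module.Projective.of_equiv' un.symm

end final

section assemble
variable (k A : Type) [Field k] [Ring A] [Algebra k A]

lemma semisimple_of_odd (hk : (2 : k) ≠ 0) (P : ℕ → Type) [∀ i, AddCommGroup (P i)]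
    [∀ i, Module (Env k A) (P i)] (n : ℕ) (hn : Odd n)
    (d : ∀ i, P (i + 1) →ₗ[Env k A] P i) (e0 : P 0 ≃ₗ[Env k A] A) (en : A ≃ₗ[Env k A] P (n + 1))
    (hP : ∀ i, 1 ≤ i → i ≤ n → Module.Projective (Env k A) (P i))
    (h0 : Function.Surjective (d 0)) (hinj : Function.Injective (d n))
    (hex : ∀ i < n, LinearMap.range (d (i + 1)) = LinearMap.ker (d i)) : IsSemisimpleRing A := by
  letI : ∀ i, Module k (P i) := fun i => Module.compHom (P i) (algebraMap k (Env k A))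
  haveI : ∀ i, IsScalarTower k (Env k A) (P i) := fun i =>
    ⟨fun c r x => by
      rw [show c • r = algebraMap k (Env k A) c * r from Algebra.smul_def c r, mul_smul]; rfl⟩
  let u0 : A ≃ₗ[Env k A] LinearMap.range (d 0) :=
    e0.symm.trans ((LinearEquiv.ofTop _ (LinearMap.range_eq_top.2 h0)).symm)
  let un : A ≃ₗ[Env k A] LinearMap.range (d n) := en.trans (LinearEquiv.ofInjective (d n) hinj)
  have hS : ∀ i < n, IsSES (R := Env k A) (M := LinearMap.range (d (i + 1)))
      (N := P (i + 1)) (L := LinearMap.range (d i))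
      (LinearMap.range (d (i + 1))).subtype (d i).rangeRestrict := by
    intro i hi
    refine ⟨Subtype.val_injective, LinearMap.surjective_rangeRestrict _, fun x => ?_⟩
    have hx := SetLike.ext_iff.1 (hex i hi) x
    rw [LinearMap.mem_ker] at hx
    rw [Submodule.coe_subtype, Subtype.range_coe]
    refine Iff.trans ?_ hx.symm
    exact Subtype.ext_iff
  have hpr : ∀ i ≤ n, PrR (lo k A) (LinearMap.range (d i)) ∧
      PrR (ro k A) (LinearMap.range (d i)) := by
    intro i
    induction i with
    | zero => exact fun _ => ⟨PrR.of_equiv _ u0 (PrR_lo_reg k A), PrR.of_equiv _ u0 (PrR_ro_reg k A)⟩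
    | succ i ih =>
      intro hi
      haveI := hP (i + 1) (by omega) hi
      obtain ⟨h1, h2⟩ := ih (by omega)
      exact (split_step k A (hS i (by omega)) h1 h2).2.2
  have hLR : ∀ i < n, LSplit k A (M' := LinearMap.range (d (i + 1)))
      (M := P (i + 1)) (M'' := LinearMap.range (d i)) (LinearMap.range (d (i + 1))).subtype (d i).rangeRestrict ∧
      RSplit k A (M' := LinearMap.range (d (i + 1)))
      (M := P (i + 1)) (M'' := LinearMap.range (d i)) (LinearMap.range (d (i + 1))).subtype (d i).rangeRestrict := by
    intro i hi
    haveI := hP (i + 1) (by omega) hi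
    obtain ⟨h1, h2⟩ := hpr i hi.le
    obtain ⟨h3, h4, -⟩ := split_step k A (hS i hi) h1 h2
    exact ⟨h3, h4⟩
  haveI := proj_of_odd k A (Z := fun i => LinearMap.range (d i)) (Q := fun i => P (i + 1))
    (fun i hi => (hLR i hi).1) (fun i hi => (hLR i hi).2) hk
    (fun i hi => hP (i + 1) (by omega) hi) u0 un hn
  exact semisimple_of_proj k A

end assemble

theorem minimal_period_even (k A : Type) [Field k] [PerfectField k] (hchar : ringChar k ≠ 2)
    [Ring A] [Algebra k A] [FiniteDimensional k A]
    (hind : ∀ e : A, e ∈ Subring.center A → e * e = e → e = 0 ∨ e = 1)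
    (hss : ¬ IsSemisimpleRing A)
    (n : ℕ) (hn : 1 ≤ n)
    (hper : HasProjExactSeq (A ⊗[k] Aᵐᵒᵖ) (regularBimodule k A) (regularBimodule k A) n)
    (hmin : ∀ m, 1 ≤ m →
      HasProjExactSeq (A ⊗[k] Aᵐᵒᵖ) (regularBimodule k A) (regularBimodule k A) m → n ≤ m) :
    Even n := by
  by_contra hodd
  rw [Nat.not_even_iff_odd] at hodd
  obtain ⟨P, d, e0, en, hP, h0, hinj, hex⟩ := hper
  exact hss (semisimple_of_odd k A (Ring.two_ne_zero hchar) (fun i => P i) n hodd d e0 en hP h0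
    hinj hex)
end
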